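/- arXiv:2201.01752 — 3 statements merged into one kernel-verified Lean document; each statement's English description precedes it below -/
import Mathlib

section
/- Suppose ω : ℤ → [1,∞) is unbounded, nonincreasing, ω(n) = 1 for all n ≥ 0, sup_{n∈ℤ} ω(n−1)/ω(n) < ∞ (so that S_ω is invertible), and Σ_{n≥1} 1/ω(−n)² < ∞. Set M = {a ∈ L²_ω : a(n) = 0 for all n ≥ 1}. Then M is a closed subspace invariant under S_ω⁻¹, every λ in the closed unit disc is an eigenvalue of the adjoint of the restriction S_ω⁻¹|_M, the pair (Y_ω, U⁻¹) is an isometric (and unitary) asymptote of S_ω⁻¹, and S_ω⁻¹|_M does not have an isometric asymptote. -/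
/-! Along `S_ω^k f` the weighted norm decreases to a multiple of `‖Y_ω f‖`, while an operator that
intertwines `S_ω⁻¹` with an isometry keeps its norm there. Such an operator is therefore bounded in
terms of `Y_ω` and factors through it, which makes `(Y_ω, U⁻¹)` an asymptote of `S_ω⁻¹`.

On `M`, summability of `1/ω(-n)²` makes `f ↦ ∑ f̂(-n) μⁿ` a bounded functional for every `|μ| ≤ 1`,
and it is an eigenvector of the adjoint of `S_ω⁻¹|_M`. If `(X, V)` were an isometric asymptote of
`S_ω⁻¹|_M`, the functionals with `|μ| = 1` would factor through `X`. Equality in the Cauchy–Schwarz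
inequality turns the corresponding Riesz vectors, a priori eigenvectors of `V*`, into eigenvectors
of the isometry `V`, so they are pairwise orthogonal. None of them is orthogonal to `X e` for the
unit mass `e` at `0`, and Bessel's inequality allows only countably many such vectors.
-/

noncomputable section
open scoped ENNReal InnerProductSpace
open ContinuousLinearMap

/-- A bounded operator `V` is an isometry. -/
def IsIsometryOp {K : Type} [NormedAddCommGroup K] [InnerProductSpace ℂ K]
    (V : K →L[ℂ] K) : Prop :=
  ∀ x, ‖V x‖ = ‖x‖

/-- A bounded operator `V` is unitary: an isometry onto. -/
def IsUnitaryOp {K : Type} [NormedAddCommGroup K] [InnerProductSpace ℂ K]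
    (V : K →L[ℂ] K) : Prop :=
  (∀ x, ‖V x‖ = ‖x‖) ∧ Function.Surjective V

/-- `(X, V)` is an isometric asymptote of `T`: `V` is an isometry, `X` intertwines `T` with `V`
and has dense range, and the pair has the universal property with respect to every pair `(Y, W)`
with `W` an isometry on a Hilbert space and `Y T = W Y`. -/
def IsIsometricAsymptote {H : Type} [NormedAddCommGroup H] [InnerProductSpace ℂ H]
    [CompleteSpace H] (T : H →L[ℂ] H)
    (K : Type) [NormedAddCommGroup K] [InnerProductSpace ℂ K] [CompleteSpace K]
    (X : H →L[ℂ] K) (V : K →L[ℂ] K) : Prop :=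
  IsIsometryOp V ∧ DenseRange X ∧ X.comp T = V.comp X ∧
    ∀ (K' : Type) [NormedAddCommGroup K'] [InnerProductSpace ℂ K'] [CompleteSpace K']
      (W : K' →L[ℂ] K') (Y : H →L[ℂ] K'), IsIsometryOp W → Y.comp T = W.comp Y →
      ∃! Z : K →L[ℂ] K', Z.comp V = W.comp Z ∧ Y = Z.comp X

/-- `(X, U)` is a unitary asymptote of `T`: `U` is unitary, `X` intertwines `T` with `U`,
the pair is minimal (`⋁_{n ≥ 0} U^{-n} X H = K`), and it has the universal property with
respect to every pair `(Y, W)` with `W` unitary on a Hilbert space and `Y T = W Y`. -/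
def IsUnitaryAsymptote {H : Type} [NormedAddCommGroup H] [InnerProductSpace ℂ H]
    [CompleteSpace H] (T : H →L[ℂ] H)
    (K : Type) [NormedAddCommGroup K] [InnerProductSpace ℂ K] [CompleteSpace K]
    (X : H →L[ℂ] K) (U : K →L[ℂ] K) : Prop :=
  IsUnitaryOp U ∧ X.comp T = U.comp X ∧
    (Submodule.span ℂ (⋃ n : ℕ, ⇑(U ^ n) ⁻¹' Set.range X)).topologicalClosure = ⊤ ∧
    ∀ (K' : Type) [NormedAddCommGroup K'] [InnerProductSpace ℂ K'] [CompleteSpace K']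
      (W : K' →L[ℂ] K') (Y : H →L[ℂ] K'), IsUnitaryOp W → Y.comp T = W.comp Y →
      ∃! Z : K →L[ℂ] K', Z.comp U = W.comp Z ∧ Y = Z.comp X

/-- The subspace `M = {f ∈ L²_ω : f̂(n) = 0 for n ≥ 1}`, described via coefficients. -/
def negCoefSubspace {L : Type} [NormedAddCommGroup L] [InnerProductSpace ℂ L]
    (coef : L →ₗ[ℂ] (ℤ → ℂ)) : Submodule ℂ L where
  carrier := {f | ∀ n : ℤ, 1 ≤ n → coef f n = 0}
  add_mem' := by
    intro a b ha hb n hn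
    simp [map_add, ha n hn, hb n hn]
  zero_mem' := by
    intro n hn
    simp
  smul_mem' := by
    intro c a ha n hn
    simp [map_smul, ha n hn]

open Filter Topology

section InnerProductSpace

variable {𝕜 E : Type*} [RCLike 𝕜] [NormedAddCommGroup E] [InnerProductSpace 𝕜 E]

theorem eq_smul_of_inner_eq_mul_norm_sq {μ : 𝕜} (hμ : ‖μ‖ = 1) {z w : E} (hw : ‖w‖ ≤ ‖z‖)
    (hzw : ⟪z, w⟫_𝕜 = μ * (‖z‖ : 𝕜) ^ 2) : w = μ • z := by
  have hinner : RCLike.re ⟪w, μ • z⟫_𝕜 = ‖z‖ ^ 2 := by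
    have : ⟪w, μ • z⟫_𝕜 = ((‖z‖ ^ 2 : ℝ) : 𝕜) := by
      rw [inner_smul_right, ← inner_conj_symm, hzw, map_mul, ← mul_assoc, RCLike.mul_conj, hμ]
      simp
    rw [this, RCLike.ofReal_re]
  have hsq : ‖w - μ • z‖ ^ 2 ≤ 0 := by
    rw [norm_sub_sq (𝕜 := 𝕜), hinner, norm_smul, hμ, one_mul]
    linarith [pow_le_pow_left₀ (norm_nonneg w) hw 2]
  rw [← sub_eq_zero, ← norm_eq_zero]
  exact pow_eq_zero_iff two_ne_zero |>.mp (hsq.antisymm (sq_nonneg _))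

theorem inner_eq_zero_of_inner_map_eq_mul {V : E → E} {μ ν : 𝕜} (hν : ‖ν‖ = 1) (hμν : μ ≠ ν)
    {z w : E} (hV : ‖V w‖ ≤ ‖w‖) (hz : ⟪z, V w⟫_𝕜 = μ * ⟪z, w⟫_𝕜)
    (hw : ⟪w, V w⟫_𝕜 = ν * ⟪w, w⟫_𝕜) : ⟪z, w⟫_𝕜 = 0 := by
  have hVw : V w = ν • w :=
    eq_smul_of_inner_eq_mul_norm_sq hν hV (by rw [hw, inner_self_eq_norm_sq_to_K])
  rw [hVw, inner_smul_right] at hz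
  by_contra hne
  exact hμν (mul_right_cancel₀ hne hz).symm

theorem countable_of_pairwise_inner_eq_zero {ι : Type*} {z : ι → E}
    (hz : Pairwise fun i j => ⟪z i, z j⟫_𝕜 = 0) {x : E} (hx : ∀ i, ⟪z i, x⟫_𝕜 ≠ 0) :
    Countable ι := by
  have hne (i) : z i ≠ 0 := fun h => hx i (by rw [h, inner_zero_left])
  have hon : Orthonormal 𝕜 fun i => ((‖z i‖⁻¹ : ℝ) : 𝕜) • z i :=
    ⟨fun i => by simp [norm_smul, hne i],
      fun i j hij => by simp [inner_smul_left, inner_smul_right, hz hij]⟩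
  have hsupp : (Function.support fun i => ‖⟪((‖z i‖⁻¹ : ℝ) : 𝕜) • z i, x⟫_𝕜‖ ^ 2) = Set.univ := by
    ext i
    simp [inner_smul_left, hne, hx]
  rw [← Set.countable_univ_iff, ← hsupp]
  exact (hon.inner_products_summable x).countable_support

theorem exists_mem_forall_inner_eq (M : Submodule 𝕜 E) [CompleteSpace M] (φ : E →L[𝕜] 𝕜) :
    ∃ f ∈ M, ∀ g ∈ M, ⟪f, g⟫_𝕜 = φ g := by
  let f : M := (InnerProductSpace.toDual 𝕜 M).symm (φ.comp M.subtypeL)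
  refine ⟨f, f.2, fun g hg => ?_⟩
  exact InnerProductSpace.toDual_symm_apply (x := (⟨g, hg⟩ : M)) (y := φ.comp M.subtypeL)

end InnerProductSpace

section NormedSpace

variable {𝕜 E F G : Type*} [NontriviallyNormedField 𝕜] [NormedAddCommGroup E] [NormedSpace 𝕜 E]
  [NormedAddCommGroup F] [NormedSpace 𝕜 F] [NormedAddCommGroup G] [NormedSpace 𝕜 G]

theorem existsUnique_intertwining_of_norm_le [CompleteSpace G] {T : E →L[𝕜] E} {X : E →L[𝕜] F}
    {V : F →L[𝕜] F} {W : G →L[𝕜] G} {Y : E →L[𝕜] G} (hX : DenseRange X)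
    (hXT : X.comp T = V.comp X) (hYT : Y.comp T = W.comp Y) {C : ℝ}
    (hYX : ∀ x, ‖Y x‖ ≤ C * ‖X x‖) :
    ∃! Z : F →L[𝕜] G, Z.comp V = W.comp Z ∧ Y = Z.comp X := by
  have eq_of_comp_eq {Z Z' : F →L[𝕜] G} (h : Z.comp X = Z'.comp X) : Z = Z' :=
    DFunLike.coe_injective
      (hX.equalizer Z.continuous Z'.continuous (congrArg DFunLike.coe h))
  let Z : F →L[𝕜] G := Y.toLinearMap.extendOfNorm X.toLinearMap
  have hZX : Z.comp X = Y := ContinuousLinearMap.ext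
    (LinearMap.extendOfNorm_eq (f := Y.toLinearMap) (e := X.toLinearMap) hX ⟨C, hYX⟩)
  refine ⟨Z, ⟨eq_of_comp_eq ?_, hZX.symm⟩, fun Z' hZ' => eq_of_comp_eq (hZX.trans hZ'.2).symm⟩
  calc (Z.comp V).comp X = (Z.comp X).comp T := by
        rw [ContinuousLinearMap.comp_assoc, ← hXT, ContinuousLinearMap.comp_assoc]
    _ = (W.comp Z).comp X := by rw [hZX, hYT, ContinuousLinearMap.comp_assoc, hZX]

theorem exists_continuousLinearMap_eq_tsum [CompleteSpace E] {c : ℕ → E →L[𝕜] F}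
    (hc : ∀ x, Summable fun n => c n x) : ∃ φ : E →L[𝕜] F, ∀ x, φ x = ∑' n, c n x := by
  have hlim : Tendsto (fun (N : ℕ) (x : E) => (∑ n ∈ Finset.range N, c n) x) atTop
      (𝓝 fun x => ∑' n, c n x) := by
    refine tendsto_pi_nhds.2 fun x => ?_
    simpa only [_root_.sum_apply] using (hc x).hasSum.tendsto_sum_nat
  exact ⟨continuousLinearMapOfTendsto _ hlim, fun x => rfl⟩

end NormedSpace

section lp

variable {ι F : Type*} {E : ι → Type*} {p : ℝ≥0∞} [NormedAddCommGroup F]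
  [∀ i, NormedAddCommGroup (E i)]

theorem lp_norm_eq_of_apply_eq_comp_equiv (hp : 0 < p.toReal) (e : ι ≃ ι)
    {a b : lp (fun _ : ι => F) p} (hab : ∀ i, b i = a (e i)) : ‖b‖ = ‖a‖ := by
  simp only [lp.norm_eq_tsum_rpow hp, hab]
  rw [e.tsum_eq fun i => ‖a i‖ ^ p.toReal]

theorem dense_of_forall_lp_single_mem [DecidableEq ι] [Fact (1 ≤ p)] (hp : p ≠ ∞)
    {M : AddSubmonoid (lp E p)} (hM : ∀ i v, lp.single p i v ∈ M) : Dense (M : Set (lp E p)) :=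
  fun a => mem_closure_of_tendsto (lp.hasSum_single hp a)
    (Eventually.of_forall fun _ => sum_mem fun i _ => hM i (a i))

end lp

theorem uncountable_circle : Uncountable Circle := by
  refine ⟨fun _ => ?_⟩
  have hIoc : (Set.Ioc (-Real.pi) Real.pi).Countable := Circle.argEquiv.symm.injective.countable
  rw [← Cardinal.le_aleph0_iff_set_countable, Cardinal.mk_Ioc_real (by linarith [Real.pi_pos])]
    at hIoc
  exact hIoc.not_gt Cardinal.aleph0_lt_continuum

section Asymptote

variable {H : Type} [NormedAddCommGroup H] [InnerProductSpace ℂ H] [CompleteSpace H]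
  {K : Type} [NormedAddCommGroup K] [InnerProductSpace ℂ K] [CompleteSpace K]
  {T : H →L[ℂ] H} {X : H →L[ℂ] K} {V : K →L[ℂ] K}

theorem IsIsometricAsymptote.isUnitaryAsymptote (h : IsIsometricAsymptote T K X V)
    (hV : Function.Surjective V) : IsUnitaryAsymptote T K X V := by
  obtain ⟨hVisom, hX, hXT, huniv⟩ := h
  refine ⟨⟨hVisom, hV⟩, hXT, ?_, fun K' _ _ _ W Y hW hY => huniv K' W Y hW.1 hY⟩
  rw [← Submodule.dense_iff_topologicalClosure_eq_top]
  refine hX.mono (Set.Subset.trans ?_ Submodule.subset_span)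
  exact fun a ha => Set.mem_iUnion.2 ⟨0, by simpa using ha⟩

theorem isIsometricAsymptote_of_tendsto {S : H →L[ℂ] H}
    (hTS : T.comp S = ContinuousLinearMap.id ℂ H) (hV : IsIsometryOp V) (hX : DenseRange X)
    (hXT : X.comp T = V.comp X) {c : ℝ}
    (hS : ∀ x, Tendsto (fun k : ℕ => ‖(S ^ k) x‖) atTop (𝓝 (c * ‖X x‖))) :
    IsIsometricAsymptote T K X V := by
  refine ⟨hV, hX, hXT, fun K' _ _ _ W Y hW hYT => ?_⟩
  have hYS (x : H) : ‖Y (S x)‖ = ‖Y x‖ := by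
    rw [← hW (Y (S x)), ← ContinuousLinearMap.comp_apply, ← hYT, ContinuousLinearMap.comp_apply,
      ← ContinuousLinearMap.comp_apply T, hTS, ContinuousLinearMap.id_apply]
  have hYpow (k : ℕ) (x : H) : ‖Y ((S ^ k) x)‖ = ‖Y x‖ := by
    induction k with
    | zero => simp
    | succ k ih => rw [pow_succ', mul_apply_eq_comp, hYS, ih]
  refine existsUnique_intertwining_of_norm_le hX hXT hYT (C := ‖Y‖ * c) fun x => ?_
  rw [mul_assoc]
  exact ge_of_tendsto' ((hS x).const_mul ‖Y‖) fun k => hYpow k x ▸ Y.le_opNorm _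

theorem IsIsometricAsymptote.exists_inner_map_eq_mul (h : IsIsometricAsymptote T K X V)
    {μ : ℂ} (hμ : ‖μ‖ = 1) {φ : H →L[ℂ] ℂ} (hφ : ∀ x, φ (T x) = μ * φ x) :
    ∃ z : K, (∀ k, ⟪z, V k⟫_ℂ = μ * ⟪z, k⟫_ℂ) ∧ ∀ x, ⟪z, X x⟫_ℂ = φ x := by
  obtain ⟨Z, ⟨hZV, hZX⟩, -⟩ := h.2.2.2 ℂ (μ • ContinuousLinearMap.id ℂ ℂ) φ
    (fun x => by simp [hμ]) (by ext x; simp [hφ])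
  refine ⟨(InnerProductSpace.toDual ℂ K).symm Z, fun k => ?_, fun x => ?_⟩
  · simpa using DFunLike.congr_fun hZV k
  · simp [hZX]

theorem IsIsometricAsymptote.countable_setOf_eigenfunctional (h : IsIsometricAsymptote T K X V)
    (x : H) :
    {μ : Circle | ∃ φ : H →L[ℂ] ℂ, (∀ y, φ (T y) = μ * φ y) ∧ φ x ≠ 0}.Countable := by
  choose φ hφ hφx using fun μ :
    {μ : Circle | ∃ φ : H →L[ℂ] ℂ, (∀ y, φ (T y) = μ * φ y) ∧ φ x ≠ 0} => μ.2
  choose z hzV hzX using fun μ => h.exists_inner_map_eq_mul (Circle.norm_coe μ.1) (hφ μ)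
  have hz : Pairwise fun μ ν => ⟪z μ, z ν⟫_ℂ = 0 := fun μ ν hμν =>
    inner_eq_zero_of_inner_map_eq_mul (Circle.norm_coe ν.1)
      (fun heq => hμν (Subtype.ext (Circle.ext heq))) (h.1 (z ν)).le (hzV μ _) (hzV ν _)
  exact countable_of_pairwise_inner_eq_zero hz (x := X x) fun μ => by
    rw [hzX]
    exact hφx μ

end Asymptote

theorem map_mem_negCoefSubspace {L : Type} [NormedAddCommGroup L] [InnerProductSpace ℂ L]
    {coef : L →ₗ[ℂ] (ℤ → ℂ)} {T : L →L[ℂ] L} (hT : ∀ f n, coef (T f) n = coef f (n + 1)) :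
    ∀ f ∈ negCoefSubspace coef, T f ∈ negCoefSubspace coef := fun f hf n hn => by
  rw [hT]
  exact hf (n + 1) (by omega)

/-- `coef` presents `L` as a model of the weighted space `ℓ²(ι, ω)`: its image is the space of
families with `∑ |a i|² ω(i)² < ∞`, and the norm of `L` is the weighted norm. For `ι = ℤ` this is
the space `L²_ω` described by Fourier coefficients. -/
structure IsWeightedL2 {ι L : Type*} [NormedAddCommGroup L] [InnerProductSpace ℂ L]
    (ω : ι → ℝ) (coef : L →ₗ[ℂ] (ι → ℂ)) : Prop where
  norm_sq (f : L) : ‖f‖ ^ 2 = ∑' i, ‖coef f i‖ ^ 2 * ω i ^ 2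
  exists_coef_eq (a : ι → ℂ) (ha : Summable fun i => ‖a i‖ ^ 2 * ω i ^ 2) : ∃ f, coef f = a

namespace IsWeightedL2

section Coefficients

variable {ι L : Type*} [NormedAddCommGroup L] [InnerProductSpace ℂ L] {ω : ι → ℝ}
  {coef : L →ₗ[ℂ] (ι → ℂ)}

theorem coef_injective (h : IsWeightedL2 ω coef) : Function.Injective coef := by
  refine (injective_iff_map_eq_zero coef).2 fun f hf => ?_
  simpa [hf] using h.norm_sq f

theorem summable (h : IsWeightedL2 ω coef) (f : L) :
    Summable fun i => ‖coef f i‖ ^ 2 * ω i ^ 2 := by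
  by_contra hns
  have hf : f = 0 := by simpa [tsum_eq_zero_of_not_summable hns] using h.norm_sq f
  exact hns (by simp [hf, summable_zero])

theorem norm_coef_mul_le (h : IsWeightedL2 ω coef) (f : L) (i : ι) :
    ‖coef f i‖ * ω i ≤ ‖f‖ := by
  refine le_of_sq_le_sq ?_ (norm_nonneg f)
  rw [mul_pow, h.norm_sq]
  exact (h.summable f).le_tsum i fun j _ => by positivity

theorem exists_continuousLinearMap_eq_coef (h : IsWeightedL2 ω coef) {i : ι} (hω : 0 < ω i) :
    ∃ c : L →L[ℂ] ℂ, ∀ f, c f = coef f i :=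
  ⟨((LinearMap.proj i).comp coef).mkContinuous (ω i)⁻¹ fun f => by
    rw [inv_mul_eq_div, le_div_iff₀ hω]
    exact h.norm_coef_mul_le f i, fun _ => rfl⟩

theorem exists_coef_eq_single [DecidableEq ι] (h : IsWeightedL2 ω coef) (i : ι) (v : ℂ) :
    ∃ f, coef f = Pi.single i v := by
  refine h.exists_coef_eq _ (summable_of_ne_finset_zero (s := {i}) fun j hj => ?_)
  rw [Pi.single_eq_of_ne (by simpa using hj)]
  simp

theorem summable_norm_coef_comp (h : IsWeightedL2 ω coef) {α : Type*} {j : α → ι}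
    (hj : Function.Injective j) (hω : ∀ a, 0 < ω (j a))
    (hsum : Summable fun a => 1 / ω (j a) ^ 2) (f : L) : Summable fun a => ‖coef f (j a)‖ := by
  have hprod : Summable fun a => ‖coef f (j a)‖ * ω (j a) * (1 / ω (j a)) :=
    Real.summable_mul_of_Lp_Lq_of_nonneg Real.HolderConjugate.two_two
      (fun a => mul_nonneg (norm_nonneg _) (hω a).le) (fun a => (one_div_pos.2 (hω a)).le)
      (by simpa [mul_pow, Function.comp_def] using (h.summable f).comp_injective hj)
      (by simpa using hsum)
  exact hprod.congr fun a => by rw [mul_assoc, mul_one_div_cancel (hω a).ne', mul_one]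

theorem denseRange_inclusion (h : IsWeightedL2 ω coef) {Y : L →L[ℂ] lp (fun _ : ι => ℂ) 2}
    (hY : ∀ f i, Y f i = coef f i) : DenseRange Y := by
  classical
  refine dense_of_forall_lp_single_mem (M := Y.range.toAddSubmonoid) ENNReal.ofNat_ne_top
    fun i v => ?_
  obtain ⟨f, hf⟩ := h.exists_coef_eq_single i v
  refine ⟨f, lp.ext ?_⟩
  rw [lp.coeFn_single, ← hf]
  exact funext (hY f)

end Coefficients

section Shift

variable {L : Type*} [NormedAddCommGroup L] [InnerProductSpace ℂ L] {ω : ℤ → ℝ}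
  {coef : L →ₗ[ℂ] (ℤ → ℂ)} {S T : L →L[ℂ] L}

theorem summable_coef_add_one (h : IsWeightedL2 ω coef) (hω : ∀ n, 0 < ω n) {C : ℝ}
    (hC : ∀ n, ω (n - 1) / ω n ≤ C) (f : L) :
    Summable fun n => ‖coef f (n + 1)‖ ^ 2 * ω n ^ 2 := by
  have hshift : Summable fun n => C ^ 2 * (‖coef f (n + 1)‖ ^ 2 * ω (n + 1) ^ 2) :=
    ((Equiv.addRight (1 : ℤ)).summable_iff.2 (h.summable f)).mul_left (C ^ 2)
  refine hshift.of_nonneg_of_le (fun n => by positivity) fun n => ?_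
  have hle : ω n ≤ C * ω (n + 1) := by
    simpa [div_le_iff₀ (hω (n + 1))] using hC (n + 1)
  calc ‖coef f (n + 1)‖ ^ 2 * ω n ^ 2 ≤ ‖coef f (n + 1)‖ ^ 2 * (C * ω (n + 1)) ^ 2 := by
        have := (hω n).le
        gcongr
    _ = C ^ 2 * (‖coef f (n + 1)‖ ^ 2 * ω (n + 1) ^ 2) := by ring

theorem bijective_shift (h : IsWeightedL2 ω coef) (hω : ∀ n, 0 < ω n)
    (hratio : ∃ C, ∀ n, ω (n - 1) / ω n ≤ C) (hS : ∀ f n, coef (S f) n = coef f (n - 1)) :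
    Function.Bijective S := by
  constructor
  · intro f g hfg
    refine h.coef_injective (funext fun n => ?_)
    simpa [hS] using congrArg (coef · (n + 1)) hfg
  · intro g
    obtain ⟨C, hC⟩ := hratio
    obtain ⟨f, hf⟩ := h.exists_coef_eq _ (h.summable_coef_add_one hω hC g)
    exact ⟨f, h.coef_injective (funext fun n => by simp [hS, hf])⟩

theorem exists_inverse_shift [CompleteSpace L] (h : IsWeightedL2 ω coef) (hω : ∀ n, 0 < ω n)
    (hratio : ∃ C, ∀ n, ω (n - 1) / ω n ≤ C) (hS : ∀ f n, coef (S f) n = coef f (n - 1)) :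
    ∃ T : L →L[ℂ] L, S.comp T = ContinuousLinearMap.id ℂ L ∧
      T.comp S = ContinuousLinearMap.id ℂ L ∧ ∀ f n, coef (T f) n = coef f (n + 1) := by
  have hbij := h.bijective_shift hω hratio hS
  let e : L ≃L[ℂ] L := ContinuousLinearEquiv.ofBijective S
    (LinearMap.ker_eq_bot.2 hbij.injective) (LinearMap.range_eq_top.2 hbij.surjective)
  have hST (f : L) : S (e.symm f) = f := e.apply_symm_apply f
  refine ⟨e.symm, ContinuousLinearMap.ext hST, ContinuousLinearMap.ext e.symm_apply_apply,
    fun f n => ?_⟩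
  simpa [hST] using (hS (e.symm f) (n + 1)).symm

theorem norm_pow_shift_sq (h : IsWeightedL2 ω coef) (hS : ∀ f n, coef (S f) n = coef f (n - 1))
    (k : ℕ) (f : L) : ‖(S ^ k) f‖ ^ 2 = ∑' n, ‖coef f n‖ ^ 2 * ω (n + k) ^ 2 := by
  have hpow (n : ℤ) : coef ((S ^ k) f) n = coef f (n - k) := by
    induction k generalizing n with
    | zero => simp
    | succ k ih =>
      rw [pow_succ', mul_apply_eq_comp, hS, ih, sub_sub, Nat.cast_succ, add_comm]
  rw [h.norm_sq, ← (Equiv.addRight (k : ℤ)).tsum_eq]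
  simp only [hpow, Equiv.coe_addRight, add_sub_cancel_right]

theorem tendsto_norm_pow_shift (h : IsWeightedL2 ω coef) (hω : ∀ n, 0 ≤ ω n) (hmono : Antitone ω)
    {c : ℝ} (hc : Tendsto ω atTop (𝓝 c)) (hS : ∀ f n, coef (S f) n = coef f (n - 1))
    {Y : L →L[ℂ] lp (fun _ : ℤ => ℂ) 2} (hY : ∀ f n, Y f n = coef f n) (f : L) :
    Tendsto (fun k : ℕ => ‖(S ^ k) f‖) atTop (𝓝 (c * ‖Y f‖)) := by
  have hc0 : 0 ≤ c := ge_of_tendsto' hc hω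
  have hYf : (c * ‖Y f‖) ^ 2 = ∑' n, ‖coef f n‖ ^ 2 * c ^ 2 := by
    have hnorm := lp.norm_rpow_eq_tsum (p := 2) (by norm_num) (Y f)
    simp only [ENNReal.toReal_ofNat, Real.rpow_ofNat, hY] at hnorm
    rw [mul_pow, hnorm, tsum_mul_right, mul_comm]
  have hsq : Tendsto (fun k : ℕ => ‖(S ^ k) f‖ ^ 2) atTop (𝓝 ((c * ‖Y f‖) ^ 2)) := by
    simp only [h.norm_pow_shift_sq hS, hYf]
    refine tendsto_tsum_of_dominated_convergence (h.summable f) (fun n => ?_)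
      (Eventually.of_forall fun k n => ?_)
    · have hn : Tendsto (fun k : ℕ => n + (k : ℤ)) atTop atTop :=
        tendsto_atTop_add_const_left _ n tendsto_natCast_atTop_atTop
      exact ((hc.comp hn).pow 2).const_mul _
    · rw [Real.norm_of_nonneg (by positivity)]
      have hle : ω (n + k) ≤ ω n := hmono (by omega)
      have := hω (n + k)
      gcongr
  simpa [Real.sqrt_sq, mul_nonneg hc0] using hsq.sqrt

end Shift

section NegCoefSubspace

variable {L : Type} [NormedAddCommGroup L] [InnerProductSpace ℂ L] {ω : ℤ → ℝ}
  {coef : L →ₗ[ℂ] (ℤ → ℂ)}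

theorem isClosed_negCoefSubspace (h : IsWeightedL2 ω coef) (hω : ∀ n, 0 < ω n) :
    IsClosed (negCoefSubspace coef : Set L) := by
  choose c hc using fun n => h.exists_continuousLinearMap_eq_coef (hω n)
  have hset : (negCoefSubspace coef : Set L) = ⋂ n : ℤ, ⋂ _ : 1 ≤ n, {f | c n f = 0} := by
    ext f
    simp only [Set.mem_iInter, Set.mem_ofPred_eq, hc]
    rfl
  rw [hset]
  exact isClosed_iInter fun n => isClosed_iInter fun _ =>
    isClosed_eq (c n).continuous continuous_const

theorem exists_mem_coef_eq_single_zero (h : IsWeightedL2 ω coef) :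
    ∃ e ∈ negCoefSubspace coef, coef e = Pi.single 0 1 := by
  obtain ⟨e, he⟩ := h.exists_coef_eq_single 0 1
  exact ⟨e, fun n hn => by rw [he, Pi.single_eq_of_ne (by omega)], he⟩

end NegCoefSubspace

section Asymptote

variable {L : Type} [NormedAddCommGroup L] [InnerProductSpace ℂ L] [CompleteSpace L]
  {ω : ℤ → ℝ} {coef : L →ₗ[ℂ] (ℤ → ℂ)} {S T : L →L[ℂ] L}

theorem isIsometricAsymptote (h : IsWeightedL2 ω coef) (hω : ∀ n, 0 ≤ ω n) (hmono : Antitone ω)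
    (hS : ∀ f n, coef (S f) n = coef f (n - 1)) (hT : ∀ f n, coef (T f) n = coef f (n + 1))
    {Y : L →L[ℂ] lp (fun _ : ℤ => ℂ) 2} (hY : ∀ f n, Y f n = coef f n)
    {B : lp (fun _ : ℤ => ℂ) 2 →L[ℂ] lp (fun _ : ℤ => ℂ) 2} (hB : ∀ a n, B a n = a (n + 1)) :
    IsIsometricAsymptote T (lp (fun _ : ℤ => ℂ) 2) Y B := by
  have hBisom : IsIsometryOp B := fun a =>
    lp_norm_eq_of_apply_eq_comp_equiv (by norm_num) (Equiv.addRight (1 : ℤ)) (hB a)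
  have hTS : T.comp S = ContinuousLinearMap.id ℂ L := ContinuousLinearMap.ext fun f =>
    h.coef_injective (funext fun n => by simp [hS, hT])
  have hYT : Y.comp T = B.comp Y := by
    ext f n
    simp [hY, hB, hT]
  have hlim : Tendsto ω atTop (𝓝 (⨅ n, ω n)) :=
    tendsto_atTop_ciInf hmono ⟨0, Set.forall_mem_range.2 hω⟩
  exact isIsometricAsymptote_of_tendsto hTS hBisom (h.denseRange_inclusion hY) hYT
    (h.tendsto_norm_pow_shift hω hmono hlim hS hY)

theorem exists_eigenfunctional (h : IsWeightedL2 ω coef) (hω : ∀ n, 0 < ω n)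
    (hsum : Summable fun n : ℕ => 1 / ω (-n) ^ 2) (hT : ∀ f n, coef (T f) n = coef f (n + 1))
    {μ : ℂ} (hμ : ‖μ‖ ≤ 1) :
    ∃ φ : L →L[ℂ] ℂ, (∀ f ∈ negCoefSubspace coef, φ (T f) = μ * φ f) ∧
      ∀ v f, coef f = Pi.single 0 v → φ f = v := by
  choose c hc using fun n : ℕ => h.exists_continuousLinearMap_eq_coef (hω (-n))
  have hsummable (f : L) : Summable fun n : ℕ => μ ^ n * coef f (-n) := by
    refine .of_norm_bounded (h.summable_norm_coef_comp (j := fun n : ℕ => -(n : ℤ))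
      (neg_injective.comp Nat.cast_injective) (fun n => hω _) hsum f) fun n => ?_
    rw [norm_mul, norm_pow]
    exact mul_le_of_le_one_left (norm_nonneg _) (pow_le_one₀ (norm_nonneg _) hμ)
  obtain ⟨φ, hφ⟩ := exists_continuousLinearMap_eq_tsum (c := fun n : ℕ => μ ^ n • c n)
    (fun f => by simpa [hc] using hsummable f)
  replace hφ (f : L) : φ f = ∑' n : ℕ, μ ^ n * coef f (-n) := by simp [hφ, hc]
  refine ⟨φ, fun f hf => ?_, fun v f hf => ?_⟩
  · have hf1 : coef f 1 = 0 := hf 1 le_rfl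
    rw [hφ, hφ, (hsummable _).tsum_eq_zero_add, ← tsum_mul_left]
    simp [hT, hf1, pow_succ', mul_assoc]
  · rw [hφ, tsum_eq_single 0 fun n hn => by simp [hf, hn]]
    simp [hf]

theorem exists_adjoint_eigenvector (h : IsWeightedL2 ω coef) (hω : ∀ n, 0 < ω n)
    (hsum : Summable fun n : ℕ => 1 / ω (-n) ^ 2) (hT : ∀ f n, coef (T f) n = coef f (n + 1))
    {μ : ℂ} (hμ : ‖μ‖ ≤ 1) :
    ∃ f ∈ negCoefSubspace coef, f ≠ 0 ∧
      ∀ g ∈ negCoefSubspace coef, ⟪f, T g⟫_ℂ = (starRingEnd ℂ) μ * ⟪f, g⟫_ℂ := by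
  have := (h.isClosed_negCoefSubspace hω).completeSpace_coe
  obtain ⟨φ, hφT, hφ1⟩ := h.exists_eigenfunctional hω hsum hT (μ := starRingEnd ℂ μ) (by simpa)
  obtain ⟨f, hfM, hf⟩ := exists_mem_forall_inner_eq (negCoefSubspace coef) φ
  obtain ⟨e, heM, he⟩ := h.exists_mem_coef_eq_single_zero
  refine ⟨f, hfM, ?_, fun g hg => by rw [hf _ (map_mem_negCoefSubspace hT g hg), hf g hg, hφT g hg]⟩
  rintro rfl
  simpa [hφ1 1 e he] using hf e heM

theorem not_isIsometricAsymptote_restrict (h : IsWeightedL2 ω coef) (hω : ∀ n, 0 < ω n)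
    (hsum : Summable fun n : ℕ => 1 / ω (-n) ^ 2) (hT : ∀ f n, coef (T f) n = coef f (n + 1))
    [CompleteSpace (negCoefSubspace coef)]
    {K : Type} [NormedAddCommGroup K] [InnerProductSpace ℂ K] [CompleteSpace K]
    (X : negCoefSubspace coef →L[ℂ] K) (V : K →L[ℂ] K) :
    ¬ IsIsometricAsymptote ((T.comp (negCoefSubspace coef).subtypeL).codRestrict
      (negCoefSubspace coef) (fun x => map_mem_negCoefSubspace hT x x.2)) K X V := by
  intro hA
  obtain ⟨e, heM, he⟩ := h.exists_mem_coef_eq_single_zero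
  have := uncountable_circle
  refine Set.not_countable_univ ((hA.countable_setOf_eigenfunctional ⟨e, heM⟩).mono fun μ _ => ?_)
  obtain ⟨φ, hφT, hφ1⟩ := h.exists_eigenfunctional hω hsum hT (Circle.norm_coe μ).le
  exact ⟨φ.comp (negCoefSubspace coef).subtypeL, fun y => hφT y y.2, by simp [hφ1 1 e he]⟩

end Asymptote

end IsWeightedL2

theorem restriction_of_inverse_weighted_shift_has_no_isometric_asymptote_general
    {ω : ℤ → ℝ} (hω : ∀ n, 0 < ω n) (hmono : Antitone ω)
    (hratio : ∃ C : ℝ, ∀ n : ℤ, ω (n - 1) / ω n ≤ C)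
    (hsum : Summable fun n : ℕ => 1 / ω (-(n + 1 : ℕ) : ℤ) ^ 2)
    {L : Type} [NormedAddCommGroup L] [InnerProductSpace ℂ L] [CompleteSpace L]
    {coef : L →ₗ[ℂ] (ℤ → ℂ)} (h : IsWeightedL2 ω coef)
    {Sw : L →L[ℂ] L} (hSw : ∀ (f : L) (n : ℤ), coef (Sw f) n = coef f (n - 1))
    {Y : L →L[ℂ] lp (fun _ : ℤ => ℂ) 2} (hY : ∀ (f : L) (n : ℤ), Y f n = coef f n)
    {U Uinv : lp (fun _ : ℤ => ℂ) 2 →L[ℂ] lp (fun _ : ℤ => ℂ) 2}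
    (hU : ∀ (a : lp (fun _ : ℤ => ℂ) 2) (n : ℤ), U a n = a (n - 1))
    (hUinv : U.comp Uinv = ContinuousLinearMap.id ℂ _ ∧
      Uinv.comp U = ContinuousLinearMap.id ℂ _) :
    ∃ Sinv : L →L[ℂ] L,
      Sw.comp Sinv = ContinuousLinearMap.id ℂ L ∧ Sinv.comp Sw = ContinuousLinearMap.id ℂ L ∧
      IsClosed (negCoefSubspace coef : Set L) ∧
      ∃ hMinv : ∀ f ∈ negCoefSubspace coef, Sinv f ∈ negCoefSubspace coef,
        (∀ lam : ℂ, ‖lam‖ ≤ 1 → ∃ f ∈ negCoefSubspace coef, f ≠ 0 ∧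
          ∀ g ∈ negCoefSubspace coef, ⟪f, Sinv g⟫_ℂ = (starRingEnd ℂ) lam * ⟪f, g⟫_ℂ) ∧
        IsIsometricAsymptote Sinv (lp (fun _ : ℤ => ℂ) 2) Y Uinv ∧
        IsUnitaryAsymptote Sinv (lp (fun _ : ℤ => ℂ) 2) Y Uinv ∧
        ∀ hMclosed : IsClosed (negCoefSubspace coef : Set L),
          haveI : CompleteSpace (negCoefSubspace coef) := hMclosed.completeSpace_coe
          ¬ ∃ (K' : Type) (_ : NormedAddCommGroup K') (_ : InnerProductSpace ℂ K')
            (_ : CompleteSpace K') (X' : negCoefSubspace coef →L[ℂ] K') (V : K' →L[ℂ] K'),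
            IsIsometricAsymptote
              ((Sinv.comp (negCoefSubspace coef).subtypeL).codRestrict
                (negCoefSubspace coef) (fun x => hMinv x x.2))
              K' X' V := by
  have hsum₀ : Summable fun n : ℕ => 1 / ω (-n) ^ 2 := by
    rw [← summable_nat_add_iff 1]
    exact hsum
  obtain ⟨T, hST, hTS, hT⟩ := h.exists_inverse_shift hω hratio hSw
  have hUinv_apply (a) (n : ℤ) : Uinv a n = a (n + 1) :=
    calc Uinv a n = U (Uinv a) (n + 1) := by rw [hU, add_sub_cancel_right]
      _ = a (n + 1) := congrArg (· (n + 1)) (DFunLike.congr_fun hUinv.1 a)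
  have hUsurj : Function.Surjective Uinv := fun a => ⟨U a, DFunLike.congr_fun hUinv.2 a⟩
  have hA := h.isIsometricAsymptote (fun n => (hω n).le) hmono hSw hT hY hUinv_apply
  refine ⟨T, hST, hTS, h.isClosed_negCoefSubspace hω, map_mem_negCoefSubspace hT,
    fun _ => h.exists_adjoint_eigenvector hω hsum₀ hT, hA, hA.isUnitaryAsymptote hUsurj, ?_⟩
  rintro hMclosed ⟨K, _, _, _, X, V, hAM⟩
  have := hMclosed.completeSpace_coe
  exact h.not_isIsometricAsymptote_restrict hω hsum₀ hT X V hAM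

/-- Suppose the weight `ω` is unbounded, nonincreasing, `≡ 1` on `n ≥ 0`, satisfies
`sup_n ω(n-1)/ω(n) < ∞` and `Σ_{n ≥ 1} 1/ω(-n)² < ∞`.  Then `S_ω` is invertible, the subspace
`M = {f : f̂(n) = 0, n ≥ 1}` is closed and invariant for `S_ω⁻¹`, every `λ` in the closed unit
disc is an eigenvalue of `(S_ω⁻¹|_M)*`, the pair `(Y_ω, U⁻¹)` is an isometric (and unitary)
asymptote of `S_ω⁻¹`, and `S_ω⁻¹|_M` has no isometric asymptote. -/
theorem restriction_of_inverse_weighted_shift_has_no_isometric_asymptote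
    (ω : ℤ → ℝ) (hω1 : ∀ n, 1 ≤ ω n)
    (hmono : ∀ m n : ℤ, m ≤ n → ω n ≤ ω m)
    (hunbdd : ∀ C : ℝ, ∃ n : ℤ, C < ω n)
    (hone : ∀ n : ℤ, 0 ≤ n → ω n = 1)
    (hratio : ∃ C : ℝ, ∀ n : ℤ, ω (n - 1) / ω n ≤ C)
    (hsum : Summable fun n : ℕ => 1 / ω (-(n + 1 : ℕ) : ℤ) ^ 2)
    -- `L` is (a model of) the weighted space `L²_ω`, described by its Fourier coefficients:
    (L : Type) [NormedAddCommGroup L] [InnerProductSpace ℂ L] [CompleteSpace L]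
    (coef : L →ₗ[ℂ] (ℤ → ℂ)) (hcoefinj : Function.Injective coef)
    (hnorm : ∀ f : L, ‖f‖ ^ 2 = ∑' n : ℤ, ‖coef f n‖ ^ 2 * ω n ^ 2)
    (hcoefsurj : ∀ a : ℤ → ℂ, Summable (fun n : ℤ => ‖a n‖ ^ 2 * ω n ^ 2) → ∃ f : L, coef f = a)
    -- the bilateral weighted shift `S_ω` on `L²_ω`:
    (Sw : L →L[ℂ] L) (hSw : ∀ (f : L) (n : ℤ), coef (Sw f) n = coef f (n - 1))
    -- the natural inclusion `Y_ω : L²_ω → ℓ²(ℤ)`: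
    (Y : L →L[ℂ] lp (fun _ : ℤ => ℂ) 2) (hY : ∀ (f : L) (n : ℤ), Y f n = coef f n)
    -- the bilateral shift `U` on `ℓ²(ℤ)` and its inverse:
    (U Uinv : lp (fun _ : ℤ => ℂ) 2 →L[ℂ] lp (fun _ : ℤ => ℂ) 2)
    (hU : ∀ (a : lp (fun _ : ℤ => ℂ) 2) (n : ℤ), U a n = a (n - 1))
    (hUinv : U.comp Uinv = ContinuousLinearMap.id ℂ _ ∧
      Uinv.comp U = ContinuousLinearMap.id ℂ _) :
    ∃ Sinv : L →L[ℂ] L,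
      Sw.comp Sinv = ContinuousLinearMap.id ℂ L ∧ Sinv.comp Sw = ContinuousLinearMap.id ℂ L ∧
      IsClosed ((negCoefSubspace coef : Submodule ℂ L) : Set L) ∧
      ∃ hMinv : ∀ f ∈ negCoefSubspace coef, Sinv f ∈ negCoefSubspace coef,
        (∀ lam : ℂ, ‖lam‖ ≤ 1 → ∃ f ∈ negCoefSubspace coef, f ≠ 0 ∧
          ∀ g ∈ negCoefSubspace coef, ⟪f, Sinv g⟫_ℂ = (starRingEnd ℂ) lam * ⟪f, g⟫_ℂ) ∧
        IsIsometricAsymptote Sinv (lp (fun _ : ℤ => ℂ) 2) Y Uinv ∧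
        IsUnitaryAsymptote Sinv (lp (fun _ : ℤ => ℂ) 2) Y Uinv ∧
        ∀ hMclosed : IsClosed ((negCoefSubspace coef : Submodule ℂ L) : Set L),
          haveI : CompleteSpace ↥(negCoefSubspace coef) := hMclosed.completeSpace_coe
          ¬ ∃ (K' : Type) (_ : NormedAddCommGroup K') (_ : InnerProductSpace ℂ K')
            (_ : CompleteSpace K') (X' : ↥(negCoefSubspace coef) →L[ℂ] K')
            (V : K' →L[ℂ] K'),
            IsIsometricAsymptote
              ((Sinv.comp (negCoefSubspace coef).subtypeL).codRestrict
                (negCoefSubspace coef) (fun x => hMinv x x.2))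
              K' X' V :=
  restriction_of_inverse_weighted_shift_has_no_isometric_asymptote_general
    (fun n => one_pos.trans_le (hω1 n)) hmono hratio hsum ⟨hnorm, hcoefsurj⟩ hSw hY hU hUinv
end
end

section
/- Assume the Setup (Section 2) with conditions (sing), (main0), (main1). Let K be a Hilbert space, U an isometry on K, and X : H → K a bounded operator with X T = U X. For n ≥ 0 set K_n = clos(X H_n) and U_n = U|_{K_n}. Then: (i) for every n, U_n is unitary and there is a closed U_{0n}-invariant subspace K_{1n} of K_{0n} such that U_n is unitarily equivalent to U_{0n}|_{K_{1n}}; (ii) the subspaces K_n, n ≥ 0, are pairwise orthogonal; (iii) clos(X H) is the orthogonal direct sum ⊕_{n≥0} K_n; (iv) ‖X|_{H_n} Q_n‖ ≤ ‖X‖ for all n ≥ 0. -/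
/-!
Transporting `X` restricted to `H_n` to the model space `K_{0n}` gives an operator `Y_n` with
`Y_n U_{0n} = U Y_n` whose range has closure `K_n`. Since `U` is isometric and `U_{0k}` is unitary,
`Y_k* Y_n` intertwines `U_{0n}` with `U_{0k}`. For `n ≠ k` it therefore vanishes, so `K_n ⟂ K_k`;
for `n = k` it commutes with `U_{0n}`, hence so does `|Y_n|`, and the isometric part of the polar
decomposition `|Y_n| x ↦ Y_n x` identifies `U_{0n}` on the closure of the range of `|Y_n|` with `U`
on `K_n`. Orthogonality also shows that `X Q_n = P_n X`, where `P_n` is the orthogonal projection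
onto `K_n`: both sides are continuous and agree on every `H_k`. This gives the norm bound.
-/

noncomputable section
open scoped ENNReal InnerProductSpace
open ContinuousLinearMap

open Function

section DenseSum

variable {𝕜 ι H K : Type*} [NormedField 𝕜]
  [NormedAddCommGroup H] [NormedSpace 𝕜 H] [NormedAddCommGroup K] [NormedSpace 𝕜 K]

theorem topologicalClosure_iSup_eq_top_of_sup_eq_top {S : ι → Submodule 𝕜 H} (i : ι)
    (h : S i ⊔ (⨆ k ∈ {k : ι | k ≠ i}, S k).topologicalClosure = ⊤) :
    (⨆ k, S k).topologicalClosure = ⊤ := by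
  rw [eq_top_iff, ← h]
  exact sup_le ((le_iSup S i).trans (Submodule.le_topologicalClosure _))
    (Submodule.topologicalClosure_mono (iSup₂_le fun k _ ↦ le_iSup S k))

theorem eq_of_eqOn_of_topologicalClosure_iSup_eq_top {S : ι → Submodule 𝕜 H}
    (hS : (⨆ k, S k).topologicalClosure = ⊤) {A B : H →L[𝕜] K}
    (hAB : ∀ k, ∀ x ∈ S k, A x = B x) : A = B := by
  have hle : (⨆ k, S k).topologicalClosure ≤ LinearMap.eqLocus (A : H →ₗ[𝕜] K) B :=
    Submodule.topologicalClosure_minimal _ (iSup_le hAB) (isClosed_eq A.continuous B.continuous)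
  rw [hS] at hle
  ext x
  exact hle trivial

theorem topologicalClosure_range_eq_topologicalClosure_iSup {S : ι → Submodule 𝕜 H}
    (hS : (⨆ k, S k).topologicalClosure = ⊤) (X : H →L[𝕜] K) :
    X.range.topologicalClosure =
      (⨆ k, ((S k).map (X : H →ₗ[𝕜] K)).topologicalClosure).topologicalClosure := by
  apply le_antisymm
  · refine Submodule.topologicalClosure_minimal _ ?_ (Submodule.isClosed_topologicalClosure _)
    calc X.range = (⨆ k, S k).topologicalClosure.map (X : H →ₗ[𝕜] K) := by
          rw [hS, Submodule.map_top]
      _ ≤ ((⨆ k, S k).map (X : H →ₗ[𝕜] K)).topologicalClosure :=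
          Submodule.topologicalClosure_map X _
      _ ≤ _ := by
          rw [Submodule.map_iSup]
          exact Submodule.topologicalClosure_mono
            (iSup_mono fun k ↦ Submodule.le_topologicalClosure _)
  · exact Submodule.topologicalClosure_minimal _
      (iSup_le fun k ↦ Submodule.topologicalClosure_mono LinearMap.map_le_range)
      (Submodule.isClosed_topologicalClosure _)

end DenseSum

section Model

variable {𝕜 H E K : Type*} [NormedField 𝕜]
  [NormedAddCommGroup H] [NormedSpace 𝕜 H] [NormedAddCommGroup E] [NormedSpace 𝕜 E]
  [NormedAddCommGroup K] [NormedSpace 𝕜 K] {S : Submodule 𝕜 H}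

/-- The operator on the model space `E` of a subspace `S` corresponding to the restriction of `X`
to `S`. It replaces `X|_S`, so that adjoints are taken between Hilbert spaces. -/
def modelOperator (X : H →L[𝕜] K) (e : S ≃L[𝕜] E) : E →L[𝕜] K :=
  X ∘L S.subtypeL ∘L (e.symm : E →L[𝕜] S)

theorem range_modelOperator (X : H →L[𝕜] K) (e : S ≃L[𝕜] E) :
    (modelOperator X e).range = S.map (X : H →ₗ[𝕜] K) := by
  ext y
  constructor
  · rintro ⟨x, rfl⟩
    exact ⟨e.symm x, (e.symm x).2, rfl⟩
  · rintro ⟨x, hx, rfl⟩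
    exact ⟨e ⟨x, hx⟩, by simp [modelOperator]⟩

theorem semiconj_modelOperator {X : H →L[𝕜] K} {e : S ≃L[𝕜] E} {T : H → H} {U : E → E} {V : K → K}
    (hX : Semiconj X T V) (hTS : ∀ x ∈ S, T x ∈ S)
    (he : ∀ x : S, e ⟨T x, hTS x x.2⟩ = U (e x)) : Semiconj (modelOperator X e) U V := by
  intro y
  obtain ⟨x, rfl⟩ := e.surjective y
  simp [modelOperator, ← he, hX.eq]

end Model

section ClosureRange

variable {𝕜 E F G : Type*} [NormedField 𝕜]
  [NormedAddCommGroup E] [NormedSpace 𝕜 E]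
  [NormedAddCommGroup F] [NormedSpace 𝕜 F] [NormedAddCommGroup G] [NormedSpace 𝕜 G]

theorem map_topologicalClosure_range_of_semiconj [CompleteSpace F] {Y : E →L[𝕜] F} {U : E → E}
    (hU : Surjective U) {V : F →ₗᵢ[𝕜] F} (hY : Semiconj Y U V) :
    Y.range.topologicalClosure.map V.toLinearMap = Y.range.topologicalClosure := by
  apply SetLike.coe_injective
  calc V '' closure (Set.range Y) = closure (V '' Set.range Y) :=
        (V.isometry.isClosedEmbedding.closure_image_eq _).symm
    _ = closure (Set.range Y) := by rw [← Set.range_comp, ← hY.comp_eq, hU.range_comp]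

/-- A bounded operator as a map into the closure of its range. -/
def codRestrictClosureRange (Y : E →L[𝕜] F) : E →L[𝕜] Y.range.topologicalClosure :=
  Y.codRestrict _ fun x ↦ Submodule.le_topologicalClosure _ (LinearMap.mem_range_self _ x)

theorem denseRange_codRestrictClosureRange (Y : E →L[𝕜] F) :
    DenseRange (codRestrictClosureRange Y) :=
  ((denseRange_inclusion_iff subset_closure).2 subset_rfl).comp
    Set.rangeFactorization_surjective.denseRange (continuous_inclusion subset_closure)

variable [CompleteSpace F] [CompleteSpace G]

/-- The extension of `Y x ↦ A x` to a unitary between the closures of the ranges. For `A = |Y|` it is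
the inverse of the isometric part of the polar decomposition of `Y`. -/
def closureRangeEquiv (Y : E →L[𝕜] F) (A : E →L[𝕜] G) (h : ∀ x, ‖A x‖ = ‖Y x‖) :
    Y.range.topologicalClosure ≃ₗᵢ[𝕜] A.range.topologicalClosure :=
  (LinearEquiv.refl 𝕜 E).extendOfIsometry
    (codRestrictClosureRange Y : E →ₗ[𝕜] Y.range.topologicalClosure)
    (codRestrictClosureRange A : E →ₗ[𝕜] A.range.topologicalClosure)
    (denseRange_codRestrictClosureRange Y) (denseRange_codRestrictClosureRange A) h

theorem closureRangeEquiv_codRestrictClosureRange (Y : E →L[𝕜] F) (A : E →L[𝕜] G)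
    (h : ∀ x, ‖A x‖ = ‖Y x‖) (x : E) :
    closureRangeEquiv Y A h (codRestrictClosureRange Y x) = codRestrictClosureRange A x :=
  LinearEquiv.extendOfIsometry_eq (LinearEquiv.refl 𝕜 E)
    (codRestrictClosureRange Y : E →ₗ[𝕜] Y.range.topologicalClosure)
    (codRestrictClosureRange A : E →ₗ[𝕜] A.range.topologicalClosure) _ _ h x

theorem closureRangeEquiv_apply_of_semiconj {Y : E →L[𝕜] F} {A : E →L[𝕜] G}
    (h : ∀ x, ‖A x‖ = ‖Y x‖) {U : E → E} {V : F → F} {V' : G → G}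
    (hV : Continuous V) (hV' : Continuous V') (hY : Semiconj Y U V) (hA : Semiconj A U V')
    (hVmem : ∀ y ∈ Y.range.topologicalClosure, V y ∈ Y.range.topologicalClosure)
    (y : Y.range.topologicalClosure) :
    (closureRangeEquiv Y A h ⟨V y, hVmem y y.2⟩ : G) = V' (closureRangeEquiv Y A h y) := by
  refine (denseRange_codRestrictClosureRange Y).induction_on y
    (isClosed_eq (by fun_prop) (by fun_prop)) fun x ↦ ?_
  have hVx : (⟨V (codRestrictClosureRange Y x), hVmem _ (codRestrictClosureRange Y x).2⟩ :
      Y.range.topologicalClosure) = codRestrictClosureRange Y (U x) :=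
    Subtype.ext (hY.eq x).symm
  rw [hVx, closureRangeEquiv_codRestrictClosureRange, closureRangeEquiv_codRestrictClosureRange]
  exact hA.eq x

end ClosureRange

section Adjoint

variable {𝕜 E E' F : Type*} [RCLike 𝕜]
  [NormedAddCommGroup E] [InnerProductSpace 𝕜 E]
  [NormedAddCommGroup E'] [InnerProductSpace 𝕜 E'] [CompleteSpace E']
  [NormedAddCommGroup F] [InnerProductSpace 𝕜 F] [CompleteSpace F]

theorem semiconj_adjoint_comp {A : E →L[𝕜] F} {B : E' →L[𝕜] F} {U : E → E} {U' : E' ≃ₗᵢ[𝕜] E'}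
    {V : F →ₗᵢ[𝕜] F} (hA : Semiconj A U V) (hB : Semiconj B U' V) :
    Semiconj (adjoint B ∘L A) U U' := by
  intro x
  refine ext_inner_left 𝕜 fun v ↦ ?_
  obtain ⟨w, rfl⟩ := U'.surjective v
  calc ⟪U' w, adjoint B (A (U x))⟫_𝕜
      = ⟪B (U' w), A (U x)⟫_𝕜 := adjoint_inner_right _ _ _
    _ = ⟪V (B w), V (A x)⟫_𝕜 := by rw [hA.eq, hB.eq]
    _ = ⟪B w, A x⟫_𝕜 := V.inner_map_map _ _
    _ = ⟪w, adjoint B (A x)⟫_𝕜 := (adjoint_inner_right _ _ _).symm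
    _ = ⟪U' w, U' (adjoint B (A x))⟫_𝕜 := (U'.inner_map_map _ _).symm

theorem isOrtho_topologicalClosure_range_of_adjoint_comp_eq_zero {A : E →L[𝕜] F} {B : E' →L[𝕜] F}
    (h : adjoint B ∘L A = 0) : A.range.topologicalClosure ⟂ B.range.topologicalClosure := by
  refine Submodule.topologicalClosure_minimal _ ?_ (Submodule.isClosed_orthogonal _)
  rw [Submodule.orthogonal_closure, orthogonal_range, LinearMap.range_le_ker_iff]
  exact congrArg ContinuousLinearMap.toLinearMap h

end Adjoint

section Projection

variable {𝕜 ι H K : Type*} [RCLike 𝕜] [NormedAddCommGroup H] [NormedSpace 𝕜 H]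
  [NormedAddCommGroup K] [InnerProductSpace 𝕜 K]

theorem comp_eq_starProjection_comp {S : ι → Submodule 𝕜 H}
    (hS : (⨆ k, S k).topologicalClosure = ⊤) {X : H →L[𝕜] K} {L : ι → Submodule 𝕜 K}
    (hXL : ∀ k, ∀ x ∈ S k, X x ∈ L k) (hL : Pairwise fun i k ↦ L i ⟂ L k) (i : ι)
    [(L i).HasOrthogonalProjection] {Q : H →L[𝕜] H} (hQid : ∀ x ∈ S i, Q x = x)
    (hQker : ∀ k, k ≠ i → ∀ x ∈ S k, Q x = 0) : X ∘L Q = (L i).starProjection ∘L X := by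
  refine eq_of_eqOn_of_topologicalClosure_iSup_eq_top hS fun k x hx ↦ ?_
  rw [ContinuousLinearMap.comp_apply, ContinuousLinearMap.comp_apply]
  obtain rfl | hki := eq_or_ne k i
  · rw [hQid x hx, Submodule.starProjection_eq_self_iff.2 (hXL k x hx)]
  · rw [hQker k hki x hx, map_zero, (L i).starProjection_apply_eq_zero_iff.2]
    exact hL hki (hXL k x hx)

end Projection

section Modulus

variable {E F : Type*} [NormedAddCommGroup E] [InnerProductSpace ℂ E] [CompleteSpace E]
  [NormedAddCommGroup F] [InnerProductSpace ℂ F] [CompleteSpace F]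

/-- The modulus `|Y| = (Y* Y)^(1/2)` of an operator between two possibly different Hilbert spaces,
a case that `CFC.abs` does not cover. -/
def operatorModulus (Y : E →L[ℂ] F) : E →L[ℂ] E :=
  CFC.sqrt (adjoint Y ∘L Y)

theorem norm_operatorModulus_apply (Y : E →L[ℂ] F) (x : E) : ‖operatorModulus Y x‖ = ‖Y x‖ := by
  have hsq : operatorModulus Y * operatorModulus Y = adjoint Y ∘L Y :=
    CFC.sqrt_mul_sqrt_self _ ((nonneg_iff_isPositive _).2 (isPositive_adjoint_comp_self Y))
  have hadj : adjoint (operatorModulus Y) = operatorModulus Y :=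
    (IsSelfAdjoint.of_nonneg (CFC.sqrt_nonneg _)).star_eq
  rw [← sq_eq_sq₀ (norm_nonneg _) (norm_nonneg _), apply_norm_sq_eq_inner_adjoint_left,
    apply_norm_sq_eq_inner_adjoint_left, hadj, ← hsq]
  rfl

theorem semiconj_operatorModulus {Y : E →L[ℂ] F} {U : E →L[ℂ] E}
    (h : Semiconj (adjoint Y ∘L Y) U U) : Semiconj (operatorModulus Y) U U := by
  have hcomm : Commute (adjoint Y ∘L Y) U := ContinuousLinearMap.ext h
  exact fun x ↦ DFunLike.congr_fun (hcomm.cfcₙ_nnreal _).eq x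

theorem exists_linearIsometryEquiv_of_semiconj {U : E ≃ₗᵢ[ℂ] E} {V : F →ₗᵢ[ℂ] F} {Y : E →L[ℂ] F}
    (hY : Semiconj Y U V) :
    ∃ M : Submodule ℂ E, IsClosed (M : Set E) ∧ (∀ z ∈ M, U z ∈ M) ∧
      ∃ W : Y.range.topologicalClosure ≃ₗᵢ[ℂ] M, ∀ (y : Y.range.topologicalClosure)
        (hy : V y ∈ Y.range.topologicalClosure), (W ⟨V y, hy⟩ : E) = U (W y) := by
  have hmod : Semiconj (operatorModulus Y) U U :=
    semiconj_operatorModulus (U := (U : E →L[ℂ] E)) (semiconj_adjoint_comp hY hY)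
  have hVmap := map_topologicalClosure_range_of_semiconj U.surjective hY
  have hUmap := map_topologicalClosure_range_of_semiconj (V := U.toLinearIsometry) U.surjective hmod
  exact ⟨_, Submodule.isClosed_topologicalClosure _, Submodule.map_le_iff_le_comap.1 hUmap.le,
    closureRangeEquiv Y (operatorModulus Y) (norm_operatorModulus_apply Y), fun y _ ↦
      closureRangeEquiv_apply_of_semiconj _ V.continuous U.continuous hY hmod
        (Submodule.map_le_iff_le_comap.1 hVmap.le) y⟩

end Modulus

theorem intertwining_with_isometry_structure_general {ι H K : Type*} {K0 : ι → Type*}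
    [NormedAddCommGroup H] [NormedSpace ℂ H]
    [∀ n, NormedAddCommGroup (K0 n)] [∀ n, InnerProductSpace ℂ (K0 n)] [∀ n, CompleteSpace (K0 n)]
    [NormedAddCommGroup K] [InnerProductSpace ℂ K] [CompleteSpace K]
    (U0 : ∀ n, K0 n ≃ₗᵢ[ℂ] K0 n)
    (hsing : ∀ n k, n ≠ k → ∀ Z : K0 n →L[ℂ] K0 k, Semiconj Z (U0 n) (U0 k) → Z = 0)
    (T : H → H) (Hn : ι → Submodule ℂ H) (hTH : ∀ n, ∀ x ∈ Hn n, T x ∈ Hn n)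
    (hdense : (⨆ n, Hn n).topologicalClosure = ⊤)
    (X0 : ∀ n, Hn n ≃L[ℂ] K0 n) (hX0 : ∀ n (x : Hn n), X0 n ⟨T x, hTH n x x.2⟩ = U0 n (X0 n x))
    (Q : ι → H →L[ℂ] H) (hQid : ∀ n, ∀ x ∈ Hn n, Q n x = x)
    (hQker : ∀ n k, k ≠ n → ∀ x ∈ Hn k, Q n x = 0)
    (V : K →ₗᵢ[ℂ] K) (X : H →L[ℂ] K) (hX : Semiconj X T V) (Kn : ι → Submodule ℂ K)
    (hKn : ∀ n, Kn n = ((Hn n).map (X : H →ₗ[ℂ] K)).topologicalClosure) :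
    (∀ n, (∀ y ∈ Kn n, V y ∈ Kn n) ∧ (∀ y ∈ Kn n, ∃ z ∈ Kn n, V z = y) ∧
      ∃ K1 : Submodule ℂ (K0 n), IsClosed (K1 : Set (K0 n)) ∧ (∀ z ∈ K1, U0 n z ∈ K1) ∧
        ∃ W : Kn n ≃ₗᵢ[ℂ] K1, ∀ (y : Kn n) (hy : V y ∈ Kn n),
          (W ⟨V y, hy⟩ : K0 n) = U0 n (W y)) ∧
    (∀ n k, n ≠ k → ∀ y ∈ Kn n, ∀ z ∈ Kn k, ⟪y, z⟫_ℂ = 0) ∧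
    X.range.topologicalClosure = (⨆ n, Kn n).topologicalClosure ∧
    ∀ n x, ‖X (Q n x)‖ ≤ ‖X‖ * ‖x‖ := by
  let Y n := modelOperator X (X0 n)
  have hY n : Semiconj (Y n) (U0 n) V := semiconj_modelOperator hX (hTH n) (hX0 n)
  have hKY n : Kn n = (Y n).range.topologicalClosure := by rw [hKn, range_modelOperator]
  have horth : Pairwise fun n k ↦ Kn n ⟂ Kn k := fun n k hnk ↦ by
    simpa only [hKY] using isOrtho_topologicalClosure_range_of_adjoint_comp_eq_zero
      (hsing n k hnk _ (semiconj_adjoint_comp (hY n) (hY k)))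
  refine ⟨fun n ↦ ?_, fun n k hnk ↦ Submodule.isOrtho_iff_inner_eq.1 (horth hnk), ?_,
    fun n x ↦ ?_⟩
  · have hmap := map_topologicalClosure_range_of_semiconj (U0 n).surjective (hY n)
    rw [hKY n]
    exact ⟨Submodule.map_le_iff_le_comap.1 hmap.le, fun y hy ↦ hmap.ge hy,
      exists_linearIsometryEquiv_of_semiconj (hY n)⟩
  · simpa only [hKn] using topologicalClosure_range_eq_topologicalClosure_iSup hdense X
  · have hcomplete : CompleteSpace (Kn n) := by rw [hKn]; infer_instance
    have hXK k x (hx : x ∈ Hn k) : X x ∈ Kn k :=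
      hKn k ▸ Submodule.le_topologicalClosure _ (Submodule.mem_map_of_mem hx)
    calc ‖X (Q n x)‖ = ‖(Kn n).starProjection (X x)‖ := congrArg norm <| DFunLike.congr_fun
          (comp_eq_starProjection_comp hdense hXK horth n (hQid n) (hQker n)) x
      _ ≤ ‖X x‖ := (Kn n).norm_starProjection_apply_le _
      _ ≤ ‖X‖ * ‖x‖ := X.le_opNorm x

/-- Lemma 2.1: basic structure of intertwinings of `T` with an isometry. -/
theorem intertwining_with_isometry_structure
    {H : Type} [NormedAddCommGroup H] [InnerProductSpace ℂ H] [CompleteSpace H]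
    [TopologicalSpace.SeparableSpace H]
    (K0 : ℕ → Type) [∀ n, NormedAddCommGroup (K0 n)] [∀ n, InnerProductSpace ℂ (K0 n)]
    [∀ n, CompleteSpace (K0 n)] [∀ n, TopologicalSpace.SeparableSpace (K0 n)]
    -- the unitaries `U_{0n}`, each reductive, with pairwise singular spectral measures:
    (U0 : ∀ n, K0 n →L[ℂ] K0 n)
    (hU0 : ∀ n, IsUnitaryOp (U0 n))
    (hU0red : ∀ (n) (F : Submodule ℂ (K0 n)), IsClosed (F : Set (K0 n)) →
      (∀ x ∈ F, U0 n x ∈ F) → ∀ x ∈ F, ContinuousLinearMap.adjoint (U0 n) x ∈ F)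
    (hsing : ∀ n k, n ≠ k → ∀ Z : K0 n →L[ℂ] K0 k, Z.comp (U0 n) = (U0 k).comp Z → Z = 0)
    (T : H →L[ℂ] H)
    -- the nonzero closed `T`-invariant subspaces `H_n`:
    (Hn : ℕ → Submodule ℂ H)
    (hHcl : ∀ n, IsClosed ((Hn n : Set H)))
    (hHne : ∀ n, Hn n ≠ ⊥)
    (hTH : ∀ n, ∀ x ∈ Hn n, T x ∈ Hn n)
    -- `Vn n = ⋁_{k ≠ n} H_k`:
    (Vn : ℕ → Submodule ℂ H)
    (hVn : ∀ n, Vn n = (⨆ k ∈ {k : ℕ | k ≠ n}, Hn k).topologicalClosure)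
    -- (main0):
    (hmain0 : ∀ n, Hn n ⊓ Vn n = ⊥ ∧ Hn n ⊔ Vn n = ⊤)
    -- (main1): the invertible intertwiners `X_n : H_n → K_{0n}`:
    (X0 : ∀ n, ↥(Hn n) ≃L[ℂ] K0 n)
    (hX0 : ∀ (n) (x : ↥(Hn n)), X0 n ⟨T ↑x, hTH n ↑x x.2⟩ = U0 n (X0 n x))
    -- the skew projections `Q_n` onto `H_n` along `⋁_{k ≠ n} H_k`:
    (Q : ℕ → H →L[ℂ] H)
    (hQmem : ∀ n x, Q n x ∈ Hn n)
    (hQid : ∀ n, ∀ x ∈ Hn n, Q n x = x)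
    (hQker : ∀ n, ∀ x ∈ Vn n, Q n x = 0)
    -- an isometry `U` on a Hilbert space `K` and an intertwining `X`:
    {K : Type} [NormedAddCommGroup K] [InnerProductSpace ℂ K] [CompleteSpace K]
    (Uiso : K →L[ℂ] K) (hUiso : IsIsometryOp Uiso)
    (X : H →L[ℂ] K) (hX : X.comp T = Uiso.comp X)
    -- `Kn n = clos (X H_n)`:
    (Kn : ℕ → Submodule ℂ K)
    (hKn : ∀ n, Kn n = ((Hn n).map (↑X : H →ₗ[ℂ] K)).topologicalClosure) :
    -- (i)
    (∀ n, (∀ y ∈ Kn n, Uiso y ∈ Kn n) ∧ (∀ y ∈ Kn n, ∃ z ∈ Kn n, Uiso z = y) ∧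
      ∃ K1 : Submodule ℂ (K0 n), IsClosed (K1 : Set (K0 n)) ∧ (∀ z ∈ K1, U0 n z ∈ K1) ∧
        ∃ W : ↥(Kn n) ≃ₗᵢ[ℂ] ↥K1, ∀ (y : ↥(Kn n)) (hy : Uiso ↑y ∈ Kn n),
          (W ⟨Uiso ↑y, hy⟩ : K0 n) = U0 n ↑(W y)) ∧
    -- (ii)
    (∀ n k, n ≠ k → ∀ y ∈ Kn n, ∀ z ∈ Kn k, ⟪y, z⟫_ℂ = 0) ∧
    -- (iii)
    (LinearMap.range (↑X : H →ₗ[ℂ] K)).topologicalClosure = (⨆ n, Kn n).topologicalClosure ∧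
    -- (iv)
    (∀ (n) (x : H), ‖X (Q n x)‖ ≤ ‖X‖ * ‖x‖) := by
  have hker n k (hkn : k ≠ n) x (hx : x ∈ Hn k) : Q n x = 0 :=
    hQker n x (hVn n ▸ Submodule.le_topologicalClosure _
      (Submodule.mem_iSup_of_mem k (Submodule.mem_iSup_of_mem hkn hx)))
  exact intertwining_with_isometry_structure_general
    (fun n ↦ .ofSurjective ⟨(U0 n).toLinearMap, (hU0 n).1⟩ (hU0 n).2)
    (fun n k hnk Z hZ ↦ hsing n k hnk Z (ContinuousLinearMap.ext hZ)) T Hn hTH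
    (topologicalClosure_iSup_eq_top_of_sup_eq_top 0 (hVn 0 ▸ (hmain0 0).2)) X0 hX0 Q hQid hker
    ⟨Uiso.toLinearMap, hUiso⟩ X (DFunLike.congr_fun hX) Kn hKn
end
end

section
/- Assume the Setup (Section 2) with conditions (sing), (main0), (main1), (xxnxxn1): sup_{n≥0} ‖X_n‖‖X_n⁻¹‖ < ∞, and (qqn): sup_{n≥0} ‖Q_n‖ < ∞. Then T has a unitary asymptote if and only if there exists c > 0 such that c² Σ_n ‖x_n‖² ≤ ‖Σ_n x_n‖² for every finite family {x_n}_n with x_n ∈ H_n for all n. -/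
noncomputable section
open scoped ENNReal InnerProductSpace
open ContinuousLinearMap

/-!
After rescaling each `X_i` to norm one, the coordinate maps `J i : x ↦ X_i Q_i x` are uniformly
bounded. They intertwine `T` with `U i`, so they factor as `J i = Z i ∘ X` through any unitary
asymptote `X`. For `w ∈ ℓ²` the maps `w i • J i` assemble into a single intertwiner with values in
the Hilbert sum, and factoring it through `X` shows that `w i • Z i` is bounded in `i`; by uniform
boundedness so is `Z i`. Thus `X` is bounded below on the `H_i`, uniformly in `i`, while mutual
singularity makes the subspaces `X H_i` pairwise orthogonal, and the Pythagorean theorem gives the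
lower estimate.

Conversely, the lower estimate says that `x ↦ (J i x)ᵢ` is bounded into the Hilbert sum. Together
with `⊕ U i` it is a unitary asymptote: singularity forces every other intertwiner of `T` with a
unitary operator to map the `H_i` onto pairwise orthogonal subspaces, so that its restrictions to
them assemble into a bounded operator on the Hilbert sum.
-/

open scoped NNReal

/-- The operator `T` has a unitary asymptote on some Hilbert space. -/
def HasUnitaryAsymptote {H : Type} [NormedAddCommGroup H] [InnerProductSpace ℂ H]
    [CompleteSpace H] (T : H →L[ℂ] H) : Prop :=
  ∃ (K : Type) (_ : NormedAddCommGroup K) (_ : InnerProductSpace ℂ K) (_ : CompleteSpace K)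
    (X : H →L[ℂ] K) (U : K →L[ℂ] K), IsUnitaryAsymptote T K X U

/-- The lower Riesz estimate with constant `c` for a family of subspaces: finite sums of vectors
taken from different members of the family satisfy `c² ∑ ‖x i‖² ≤ ‖∑ x i‖²`. -/
def LowerRieszBound {ι H : Type*} [SeminormedAddCommGroup H] [Module ℂ H]
    (V : ι → Submodule ℂ H) (c : ℝ) : Prop :=
  ∀ (s : Finset ι) (x : ι → H), (∀ i ∈ s, x i ∈ V i) →
    c ^ 2 * ∑ i ∈ s, ‖x i‖ ^ 2 ≤ ‖∑ i ∈ s, x i‖ ^ 2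

theorem exists_lowerRieszBound_of_sum_norm_sq_le {ι H : Type*} [SeminormedAddCommGroup H]
    [Module ℂ H] {V : ι → Submodule ℂ H} {M : ℝ}
    (hM : ∀ (s : Finset ι) (x : ι → H), (∀ i ∈ s, x i ∈ V i) →
      ∑ i ∈ s, ‖x i‖ ^ 2 ≤ (M * ‖∑ i ∈ s, x i‖) ^ 2) :
    ∃ c, 0 < c ∧ LowerRieszBound V c := by
  refine ⟨(|M| + 1)⁻¹, by positivity, fun s x hx => ?_⟩
  rw [inv_pow, inv_mul_le_iff₀ (by positivity), ← mul_pow]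
  refine (hM s x hx).trans (sq_le_sq' ?_ ?_)
  · nlinarith [neg_abs_le M, norm_nonneg (∑ i ∈ s, x i)]
  · nlinarith [le_abs_self M, norm_nonneg (∑ i ∈ s, x i)]

section LpOperators

variable {ι 𝕜 E : Type*} {F G : ι → Type*} {p : ℝ≥0∞} [NontriviallyNormedField 𝕜]
  [NormedAddCommGroup E] [NormedSpace 𝕜 E]
  [∀ i, NormedAddCommGroup (F i)] [∀ i, NormedSpace 𝕜 (F i)]
  [∀ i, NormedAddCommGroup (G i)] [∀ i, NormedSpace 𝕜 (G i)] [Fact (1 ≤ p)]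

/-- The bounded operator `x ↦ (A i x)ᵢ` into an `ℓᵖ` direct sum, for a family `A` that is
`ℓᵖ`-bounded by `M`. -/
def lpPi (hp : p ≠ ∞) (A : ∀ i, E →L[𝕜] G i) (M : ℝ≥0)
    (hA : ∀ x (s : Finset ι), ∑ i ∈ s, ‖A i x‖ ^ p.toReal ≤ (M * ‖x‖) ^ p.toReal) :
    E →L[𝕜] lp G p :=
  LinearMap.mkContinuous
    { toFun := fun x => ⟨fun i => A i x, memℓp_gen' (hA x)⟩
      map_add' := fun x y => lp.ext (funext fun i => map_add (A i) x y)
      map_smul' := fun c x => lp.ext (funext fun i => map_smul (A i) c x) }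
    M fun x => lp.norm_le_of_forall_sum_le (ENNReal.toReal_pos (one_pos.trans_le Fact.out).ne' hp)
      (by positivity) (hA x)

@[simp]
theorem lpPi_apply (hp : p ≠ ∞) (A : ∀ i, E →L[𝕜] G i) (M : ℝ≥0)
    (hA : ∀ x (s : Finset ι), ∑ i ∈ s, ‖A i x‖ ^ p.toReal ≤ (M * ‖x‖) ^ p.toReal)
    (x : E) (i : ι) : lpPi hp A M hA x i = A i x :=
  rfl

omit [Fact (1 ≤ p)] in
theorem sum_norm_rpow_le_of_norm_le (hp : 0 < p.toReal) (x : lp F p) {y : ∀ i, G i} {C : ℝ≥0}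
    (hy : ∀ i, ‖y i‖ ≤ C * ‖x i‖) (s : Finset ι) :
    ∑ i ∈ s, ‖y i‖ ^ p.toReal ≤ (C * ‖x‖) ^ p.toReal :=
  calc ∑ i ∈ s, ‖y i‖ ^ p.toReal
      ≤ ∑ i ∈ s, (C : ℝ) ^ p.toReal * ‖x i‖ ^ p.toReal := by
        refine Finset.sum_le_sum fun i _ => ?_
        exact (Real.rpow_le_rpow (norm_nonneg _) (hy i) hp.le).trans_eq
          (Real.mul_rpow C.2 (norm_nonneg _))
    _ = (C : ℝ) ^ p.toReal * ∑ i ∈ s, ‖x i‖ ^ p.toReal := (Finset.mul_sum ..).symm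
    _ ≤ (C : ℝ) ^ p.toReal * ‖x‖ ^ p.toReal := by
        gcongr
        exact lp.sum_rpow_le_norm_rpow hp x s
    _ = (C * ‖x‖) ^ p.toReal := (Real.mul_rpow C.2 (lp.norm_nonneg' x)).symm

/-- The diagonal operator `(xᵢ)ᵢ ↦ (A i xᵢ)ᵢ` between `ℓᵖ` direct sums, for a family `A` that is
uniformly bounded by `C`. -/
def lpDiagonal (hp : p ≠ ∞) (A : ∀ i, F i →L[𝕜] G i) (C : ℝ≥0)
    (hA : ∀ i x, ‖A i x‖ ≤ C * ‖x‖) : lp F p →L[𝕜] lp G p :=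
  lpPi hp (fun i => (A i).comp (lp.evalCLM 𝕜 F p i)) C fun x =>
    sum_norm_rpow_le_of_norm_le (ENNReal.toReal_pos (one_pos.trans_le Fact.out).ne' hp) x
      fun i => hA i (x i)

@[simp]
theorem lpDiagonal_apply (hp : p ≠ ∞) (A : ∀ i, F i →L[𝕜] G i) (C : ℝ≥0)
    (hA : ∀ i x, ‖A i x‖ ≤ C * ‖x‖) (x : lp F p) (i : ι) :
    lpDiagonal hp A C hA x i = A i (x i) :=
  rfl

theorem lpDiagonal_single [DecidableEq ι] (hp : p ≠ ∞) (A : ∀ i, F i →L[𝕜] G i) (C : ℝ≥0)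
    (hA : ∀ i x, ‖A i x‖ ≤ C * ‖x‖) (i : ι) (v : F i) :
    lpDiagonal hp A C hA (lp.single p i v) = lp.single p i (A i v) := by
  ext j
  rw [lpDiagonal_apply]
  obtain rfl | hj := eq_or_ne j i
  · simp only [lp.single_apply_self]
  · simp only [lp.single_apply_ne _ _ _ hj, map_zero]

end LpOperators

theorem exists_norm_le_of_forall_lp_smul {ι : Type*} (𝕜 : Type*) [RCLike 𝕜] {E : ι → Type*}
    [∀ i, NormedAddCommGroup (E i)] [∀ i, NormedSpace 𝕜 (E i)] (p : ℝ≥0∞) [Fact (1 ≤ p)]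
    {a : ∀ i, E i} (ha : ∀ w : lp (fun _ : ι => 𝕜) p, ∃ D, ∀ i, ‖w i • a i‖ ≤ D) :
    ∃ D, ∀ i, ‖a i‖ ≤ D := by
  classical
  have hp : 0 < p := one_pos.trans_le Fact.out
  let g : ι → lp (fun _ : ι => 𝕜) p →L[𝕜] 𝕜 := fun i => (‖a i‖ : 𝕜) • lp.evalCLM 𝕜 _ p i
  have norm_g (i : ι) (w : lp (fun _ : ι => 𝕜) p) : ‖g i w‖ = ‖w i • a i‖ := by
    change ‖(‖a i‖ : 𝕜) • w i‖ = _
    rw [norm_smul, norm_smul, RCLike.norm_ofReal, abs_norm, mul_comm]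
  obtain ⟨D, hD⟩ := banach_steinhaus (g := g) fun w => by simpa only [norm_g] using ha w
  refine ⟨D, fun i => ?_⟩
  calc ‖a i‖ = ‖g i (lp.single p i 1)‖ := by rw [norm_g, lp.single_apply_self, one_smul]
    _ ≤ ‖g i‖ * ‖lp.single (E := fun _ : ι => 𝕜) p i 1‖ := (g i).le_opNorm _
    _ ≤ D := by rw [lp.norm_single hp, norm_one, mul_one]; exact hD i

/-- The operator from a Hilbert sum to `E` extending a uniformly bounded family of operators with
pairwise orthogonal ranges. -/
def orthogonalSum {ι 𝕜 E : Type*} {G : ι → Type*} [RCLike 𝕜] [NormedAddCommGroup E]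
    [InnerProductSpace 𝕜 E] [CompleteSpace E] [∀ i, NormedAddCommGroup (G i)]
    [∀ i, NormedSpace 𝕜 (G i)] (A : ∀ i, G i →L[𝕜] E)
    (hA : OrthogonalFamily 𝕜 _ fun i => (A i).range.subtypeₗᵢ) (C : ℝ≥0)
    (hC : ∀ i v, ‖A i v‖ ≤ C * ‖v‖) : lp G 2 →L[𝕜] E :=
  hA.linearIsometry.toContinuousLinearMap.comp
    (lpDiagonal (p := 2) ENNReal.ofNat_ne_top
      (fun i => (A i).codRestrict (A i).range (LinearMap.mem_range_self _)) C hC)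

theorem orthogonalSum_single {ι 𝕜 E : Type*} [DecidableEq ι] {G : ι → Type*} [RCLike 𝕜]
    [NormedAddCommGroup E] [InnerProductSpace 𝕜 E] [CompleteSpace E]
    [∀ i, NormedAddCommGroup (G i)] [∀ i, NormedSpace 𝕜 (G i)] (A : ∀ i, G i →L[𝕜] E)
    (hA : OrthogonalFamily 𝕜 _ fun i => (A i).range.subtypeₗᵢ) (C : ℝ≥0)
    (hC : ∀ i v, ‖A i v‖ ≤ C * ‖v‖) (i : ι) (v : G i) :
    orthogonalSum A hA C hC (lp.single 2 i v) = A i v :=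
  (congrArg hA.linearIsometry (lpDiagonal_single (G := fun j => (A j).range) _ _ C hC i v)).trans
    (hA.linearIsometry_apply_single (i := i) ⟨A i v, LinearMap.mem_range_self _ v⟩)

theorem IsUnitaryOp.inner_map_map {K : Type} [NormedAddCommGroup K] [InnerProductSpace ℂ K]
    {V : K →L[ℂ] K} (hV : IsUnitaryOp V) (x y : K) : ⟪V x, V y⟫_ℂ = ⟪x, y⟫_ℂ :=
  (LinearMap.norm_map_iff_inner_map_map V).1 hV.1 x y

section UnitarySum

variable {ι : Type} {G : ι → Type} [∀ i, NormedAddCommGroup (G i)]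
  [∀ i, InnerProductSpace ℂ (G i)]

/-- The Hilbert direct sum `⊕ᵢ V i` of a family of unitary operators. -/
def unitarySum (V : ∀ i, G i →L[ℂ] G i) (hV : ∀ i, IsUnitaryOp (V i)) :
    lp G 2 →L[ℂ] lp G 2 :=
  lpDiagonal ENNReal.ofNat_ne_top V 1 fun i x => by rw [(hV i).1, NNReal.coe_one, one_mul]

theorem unitarySum_apply {V : ∀ i, G i →L[ℂ] G i} (hV : ∀ i, IsUnitaryOp (V i)) (x : lp G 2)
    (i : ι) : unitarySum V hV x i = V i (x i) :=
  rfl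

theorem unitarySum_single [DecidableEq ι] {V : ∀ i, G i →L[ℂ] G i}
    (hV : ∀ i, IsUnitaryOp (V i)) (i : ι) (v : G i) :
    unitarySum V hV (lp.single 2 i v) = lp.single 2 i (V i v) :=
  lpDiagonal_single ..

theorem isUnitaryOp_unitarySum {V : ∀ i, G i →L[ℂ] G i} (hV : ∀ i, IsUnitaryOp (V i)) :
    IsUnitaryOp (unitarySum V hV) := by
  refine ⟨fun x => ?_, fun y => ?_⟩
  · simp only [lp.norm_eq_tsum_rpow (p := 2) (by simp), unitarySum_apply, (hV _).1]
  · choose x hx using fun i => (hV i).2 (y i)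
    have norm_x (i : ι) : ‖x i‖ = ‖y i‖ := by rw [← hx, (hV i).1]
    have hmem : Memℓp x 2 := memℓp_gen (by
      simpa only [norm_x] using (lp.memℓp y).summable (by simp))
    exact ⟨⟨x, hmem⟩, lp.ext (funext hx)⟩

end UnitarySum

section Disjointness

variable {K₁ K₂ K' : Type} [NormedAddCommGroup K₁] [InnerProductSpace ℂ K₁]
  [NormedAddCommGroup K₂] [InnerProductSpace ℂ K₂] [CompleteSpace K₂]
  [NormedAddCommGroup K'] [InnerProductSpace ℂ K'] [CompleteSpace K']

/-- Two operators are disjoint if only the zero operator intertwines the first with the second.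
For unitary operators this means that their spectral measures are mutually singular. -/
def AreDisjointOps (U₁ : K₁ →L[ℂ] K₁) (U₂ : K₂ →L[ℂ] K₂) : Prop :=
  ∀ Z : K₁ →L[ℂ] K₂, Z.comp U₁ = U₂.comp Z → Z = 0

theorem AreDisjointOps.inner_eq_zero {U₁ : K₁ →L[ℂ] K₁} {U₂ : K₂ →L[ℂ] K₂} {W : K' →L[ℂ] K'}
    (hdisj : AreDisjointOps U₁ U₂) (hU₂ : IsUnitaryOp U₂) (hW : IsUnitaryOp W)
    {A : K₁ →L[ℂ] K'} {B : K₂ →L[ℂ] K'} (hA : A.comp U₁ = W.comp A) (hB : B.comp U₂ = W.comp B)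
    (a : K₁) (b : K₂) : ⟪B b, A a⟫_ℂ = 0 := by
  have hBA : (adjoint B).comp A = 0 := hdisj _ <| ContinuousLinearMap.ext fun x =>
    ext_inner_left ℂ fun v => by
      obtain ⟨y, rfl⟩ := hU₂.2 v
      calc ⟪U₂ y, adjoint B (A (U₁ x))⟫_ℂ = ⟪B (U₂ y), A (U₁ x)⟫_ℂ := adjoint_inner_right ..
        _ = ⟪W (B y), W (A x)⟫_ℂ := congrArg₂ _ (DFunLike.congr_fun hB y) (DFunLike.congr_fun hA x)
        _ = ⟪B y, A x⟫_ℂ := hW.inner_map_map ..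
        _ = ⟪y, adjoint B (A x)⟫_ℂ := (adjoint_inner_right ..).symm
        _ = ⟪U₂ y, U₂ (adjoint B (A x))⟫_ℂ := (hU₂.inner_map_map ..).symm
  rw [← adjoint_inner_right, ← ContinuousLinearMap.comp_apply, hBA, zero_apply, inner_zero_right]

theorem orthogonalFamily_range_of_intertwining {ι : Type*} {K : ι → Type}
    [∀ i, NormedAddCommGroup (K i)] [∀ i, InnerProductSpace ℂ (K i)] [∀ i, CompleteSpace (K i)]
    {U : ∀ i, K i →L[ℂ] K i} {W : K' →L[ℂ] K'} (hU : ∀ i, IsUnitaryOp (U i)) (hW : IsUnitaryOp W)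
    (hdisj : Pairwise fun i j => AreDisjointOps (U i) (U j)) {A : ∀ i, K i →L[ℂ] K'}
    (hA : ∀ i, (A i).comp (U i) = W.comp (A i)) :
    OrthogonalFamily ℂ _ fun i => (A i).range.subtypeₗᵢ := by
  rintro i j hij ⟨_, a, rfl⟩ ⟨_, b, rfl⟩
  exact (hdisj hij.symm).inner_eq_zero (hU i) hW (hA j) (hA i) b a

end Disjointness

namespace IsUnitaryAsymptote

variable {H K : Type} [NormedAddCommGroup H] [InnerProductSpace ℂ H] [CompleteSpace H]
  [NormedAddCommGroup K] [InnerProductSpace ℂ K] [CompleteSpace K]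
  {T : H →L[ℂ] H} {X : H →L[ℂ] K} {U : K →L[ℂ] K}

theorem eq_of_comp_eq (h : IsUnitaryAsymptote T K X U) {K' : Type} [NormedAddCommGroup K']
    [InnerProductSpace ℂ K'] [CompleteSpace K'] {W : K' →L[ℂ] K'} (hW : IsUnitaryOp W)
    {Z₁ Z₂ : K →L[ℂ] K'} (h₁ : Z₁.comp U = W.comp Z₁) (h₂ : Z₂.comp U = W.comp Z₂)
    (heq : Z₁.comp X = Z₂.comp X) : Z₁ = Z₂ := by
  obtain ⟨-, hXT, -, huniv⟩ := h
  have hY : (Z₁.comp X).comp T = W.comp (Z₁.comp X) := by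
    rw [comp_assoc, hXT, ← comp_assoc, h₁, comp_assoc]
  exact (huniv K' W (Z₁.comp X) hW hY).unique ⟨h₁, rfl⟩ ⟨h₂, heq⟩

theorem exists_norm_le_of_norm_comp_le (h : IsUnitaryAsymptote T K X U) {ι : Type}
    {G : ι → Type} [∀ i, NormedAddCommGroup (G i)] [∀ i, InnerProductSpace ℂ (G i)]
    [∀ i, CompleteSpace (G i)] {V : ∀ i, G i →L[ℂ] G i} (hV : ∀ i, IsUnitaryOp (V i))
    {Z : ∀ i, K →L[ℂ] G i} (hZ : ∀ i, (Z i).comp U = (V i).comp (Z i)) {C : ℝ≥0}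
    (hC : ∀ i x, ‖Z i (X x)‖ ≤ C * ‖x‖) : ∃ D, ∀ i, ‖Z i‖ ≤ D := by
  refine exists_norm_le_of_forall_lp_smul ℂ 2 fun w => ?_
  have hbound (x : H) : ∀ s : Finset ι, ∑ i ∈ s, ‖(w i • (Z i).comp X) x‖ ^ (2 : ℝ≥0∞).toReal ≤
      (↑(C * ‖w‖₊) * ‖x‖) ^ (2 : ℝ≥0∞).toReal := by
    have hx (i : ι) : ‖(w i • (Z i).comp X) x‖ ≤ ↑(C * ‖x‖₊) * ‖w i‖ := by
      rw [smul_apply, norm_smul, NNReal.coe_mul, coe_nnnorm, mul_comm]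
      gcongr
      exact hC i x
    simpa only [NNReal.coe_mul, coe_nnnorm, mul_right_comm] using
      sum_norm_rpow_le_of_norm_le (by simp) w hx
  let Y : H →L[ℂ] lp G 2 := lpPi ENNReal.ofNat_ne_top (fun i => w i • (Z i).comp X) _ hbound
  have hYT : Y.comp T = (unitarySum V hV).comp Y := by
    ext x i
    have hTx : X (T x) = U (X x) := DFunLike.congr_fun h.2.1 x
    have hZX : Z i (U (X x)) = V i (Z i (X x)) := DFunLike.congr_fun (hZ i) (X x)
    simp [Y, unitarySum_apply, hTx, hZX]
  obtain ⟨S, ⟨hSU, hYS⟩, -⟩ := h.2.2.2 _ _ Y (isUnitaryOp_unitarySum hV) hYT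
  refine ⟨‖S‖, fun i => ?_⟩
  have hcoord : w i • Z i = (lp.evalCLM ℂ G 2 i).comp S := by
    refine h.eq_of_comp_eq (hV i) ?_ ?_ ?_
    · rw [smul_comp, hZ, comp_smul]
    · ext k
      exact congrArg (fun f : lp G 2 => f i) (DFunLike.congr_fun hSU k)
    · ext x
      exact congrArg (fun f : lp G 2 => f i) (DFunLike.congr_fun hYS x)
  rw [hcoord]
  exact opNorm_le_bound _ (norm_nonneg S) fun k =>
    (lp.norm_apply_le_norm two_ne_zero (S k) i).trans (S.le_opNorm k)

end IsUnitaryAsymptote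

/-- A decomposition of `T` into a uniformly topologically independent family of copies of the
operators `U i`: the embeddings `E i` intertwine `U i` with `T` and have densely spanning ranges,
the coordinate maps `J i` are biorthogonal to them, and all these operators are bounded by `C`. -/
structure IsSkewDecomposition {ι H : Type} {K : ι → Type} [NormedAddCommGroup H]
    [InnerProductSpace ℂ H] [∀ i, NormedAddCommGroup (K i)] [∀ i, InnerProductSpace ℂ (K i)]
    (T : H →L[ℂ] H) (U : ∀ i, K i →L[ℂ] K i) (E : ∀ i, K i →L[ℂ] H) (J : ∀ i, H →L[ℂ] K i)
    (C : ℝ≥0) : Prop where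
  map_embed : ∀ i v, T (E i v) = E i (U i v)
  coord_embed : ∀ i v, J i (E i v) = v
  coord_embed_of_ne : ∀ i k, k ≠ i → ∀ v, J i (E k v) = 0
  dense : (⨆ i, (E i).range).topologicalClosure = ⊤
  norm_embed_le : ∀ i v, ‖E i v‖ ≤ C * ‖v‖
  norm_coord_le : ∀ i x, ‖J i x‖ ≤ C * ‖x‖

theorem eq_of_eqOn_iSup {ι R E F : Type*} [Semiring R] [AddCommMonoid E] [Module R E]
    [TopologicalSpace E] [ContinuousAdd E] [ContinuousConstSMul R E] [AddCommMonoid F] [Module R F]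
    [TopologicalSpace F] [T2Space F] {V : ι → Submodule R E}
    (hV : (⨆ i, V i).topologicalClosure = ⊤) {f g : E →L[R] F}
    (h : ∀ i, Set.EqOn f g (V i)) : f = g := by
  have hle : ⨆ i, V i ≤ LinearMap.eqLocus f.toLinearMap g.toLinearMap := iSup_le h
  exact DFunLike.coe_injective <| Continuous.ext_on
    (Submodule.dense_iff_topologicalClosure_eq_top.2 hV) f.continuous g.continuous hle

namespace IsSkewDecomposition

variable {ι H : Type} {K : ι → Type} [NormedAddCommGroup H] [InnerProductSpace ℂ H]
  [∀ i, NormedAddCommGroup (K i)] [∀ i, InnerProductSpace ℂ (K i)] {T : H →L[ℂ] H}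
  {U : ∀ i, K i →L[ℂ] K i} {E : ∀ i, K i →L[ℂ] H} {J : ∀ i, H →L[ℂ] K i} {C : ℝ≥0}

theorem coord_map (h : IsSkewDecomposition T U E J C) (i : ι) :
    (J i).comp T = (U i).comp (J i) := by
  refine eq_of_eqOn_iSup h.dense fun k x hx => ?_
  obtain ⟨v, rfl⟩ := hx
  change J i (T (E k v)) = U i (J i (E k v))
  rw [h.map_embed]
  obtain rfl | hk := eq_or_ne k i
  · rw [h.coord_embed, h.coord_embed]
  · rw [h.coord_embed_of_ne i k hk, h.coord_embed_of_ne i k hk, map_zero]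

theorem eventually_sum_embed_coord (h : IsSkewDecomposition T U E J C) {x : H}
    (hx : x ∈ ⨆ i, (E i).range) : ∀ᶠ s in Filter.atTop, ∑ i ∈ s, E i (J i x) = x := by
  induction hx using Submodule.iSup_induction' with
  | mem k x hx =>
    obtain ⟨v, rfl⟩ := hx
    filter_upwards [Filter.eventually_ge_atTop {k}] with s hs
    change ∑ i ∈ s, E i (J i (E k v)) = E k v
    rw [Finset.sum_eq_single_of_mem k (Finset.singleton_subset_iff.1 hs) fun i _ hi => by
      rw [h.coord_embed_of_ne i k hi.symm, map_zero], h.coord_embed]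
  | zero => simp
  | add x y _ _ hx hy =>
    filter_upwards [hx, hy] with s hsx hsy
    simp only [map_add, Finset.sum_add_distrib, hsx, hsy]

theorem norm_le_norm_embed (h : IsSkewDecomposition T U E J C) (i : ι) (v : K i) :
    ‖v‖ ≤ C * ‖E i v‖ :=
  calc ‖v‖ = ‖J i (E i v)‖ := by rw [h.coord_embed]
    _ ≤ C * ‖E i v‖ := h.norm_coord_le i _

theorem sum_norm_coord_sq_le (h : IsSkewDecomposition T U E J C) {c : ℝ≥0} (hc : 0 < c)
    (hlow : LowerRieszBound (fun i => (E i).range) c) (x : H) (s : Finset ι) :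
    ∑ i ∈ s, ‖J i x‖ ^ 2 ≤ (↑(C / c) * ‖x‖) ^ 2 := by
  have hclosed : IsClosed {x : H | ∑ i ∈ s, ‖J i x‖ ^ 2 ≤ (↑(C / c) * ‖x‖) ^ 2} :=
    isClosed_le (by fun_prop) (by fun_prop)
  refine (Submodule.dense_iff_topologicalClosure_eq_top.2 h.dense).induction (fun x hx => ?_)
    hclosed x
  obtain ⟨t, ht, hst⟩ :=
    ((h.eventually_sum_embed_coord hx).and (Filter.eventually_ge_atTop s)).exists
  have hEJ : c ^ 2 * ∑ i ∈ t, ‖E i (J i x)‖ ^ 2 ≤ ‖x‖ ^ 2 := by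
    simpa only [ht] using hlow t (fun i => E i (J i x)) fun i _ => LinearMap.mem_range_self ..
  calc ∑ i ∈ s, ‖J i x‖ ^ 2 ≤ ∑ i ∈ t, ‖J i x‖ ^ 2 :=
        Finset.sum_le_sum_of_subset_of_nonneg hst fun _ _ _ => sq_nonneg _
    _ ≤ ∑ i ∈ t, (C * ‖E i (J i x)‖) ^ 2 := by
        gcongr with i
        exact h.norm_le_norm_embed i _
    _ = (C / c) ^ 2 * (c ^ 2 * ∑ i ∈ t, ‖E i (J i x)‖ ^ 2) := by
        simp only [mul_pow, ← Finset.mul_sum]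
        field_simp
    _ ≤ (C / c) ^ 2 * ‖x‖ ^ 2 := by gcongr
    _ = (↑(C / c) * ‖x‖) ^ 2 := by rw [NNReal.coe_div, mul_pow]

variable {M : ℝ≥0} (hM : ∀ x (s : Finset ι),
  ∑ i ∈ s, ‖J i x‖ ^ (2 : ℝ≥0∞).toReal ≤ (M * ‖x‖) ^ (2 : ℝ≥0∞).toReal)

theorem lpPi_coord_embed [DecidableEq ι] (h : IsSkewDecomposition T U E J C) (i : ι) (v : K i) :
    lpPi ENNReal.ofNat_ne_top J M hM (E i v) = lp.single 2 i v := by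
  ext j
  rw [lpPi_apply]
  obtain rfl | hj := eq_or_ne j i
  · rw [h.coord_embed, lp.single_apply_self]
  · rw [h.coord_embed_of_ne j i hj.symm, lp.single_apply_ne _ _ _ hj]

theorem denseRange_lpPi_coord (h : IsSkewDecomposition T U E J C) :
    DenseRange (lpPi ENNReal.ofNat_ne_top J M hM) := by
  classical
  intro y
  refine mem_closure_of_tendsto (lp.hasSum_single ENNReal.ofNat_ne_top y)
    (Filter.Eventually.of_forall fun s => ⟨∑ i ∈ s, E i (y i), ?_⟩)
  simp only [map_sum, h.lpPi_coord_embed hM]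

variable {L : Type} [NormedAddCommGroup L] [InnerProductSpace ℂ L] {X : H →L[ℂ] L}
  {W : L →L[ℂ] L}

theorem comp_embed_intertwining (h : IsSkewDecomposition T U E J C) (hXT : X.comp T = W.comp X)
    (i : ι) : (X.comp (E i)).comp (U i) = W.comp (X.comp (E i)) := by
  ext v
  exact (congrArg X (h.map_embed i v)).symm.trans (DFunLike.congr_fun hXT (E i v))

variable [∀ i, CompleteSpace (K i)] [CompleteSpace L]

theorem norm_map_sum_sq_eq (h : IsSkewDecomposition T U E J C) (hU : ∀ i, IsUnitaryOp (U i))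
    (hW : IsUnitaryOp W) (hdisj : Pairwise fun i j => AreDisjointOps (U i) (U j))
    (hXT : X.comp T = W.comp X) {s : Finset ι} {x : ι → H} (hx : ∀ i ∈ s, x i ∈ (E i).range) :
    ‖X (∑ i ∈ s, x i)‖ ^ 2 = ∑ i ∈ s, ‖X (x i)‖ ^ 2 := by
  choose! v hv using hx
  calc ‖X (∑ i ∈ s, x i)‖ ^ 2 = ‖∑ i ∈ s, X (E i (v i))‖ ^ 2 := by
        rw [map_sum, Finset.sum_congr rfl fun i hi => congrArg X (hv i hi).symm]
        rfl
    _ = ∑ i ∈ s, ‖X (E i (v i))‖ ^ 2 :=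
        (orthogonalFamily_range_of_intertwining hU hW hdisj
          (h.comp_embed_intertwining hXT)).norm_sum
          (fun i => ⟨X (E i (v i)), LinearMap.mem_range_self _ (v i)⟩) s
    _ = ∑ i ∈ s, ‖X (x i)‖ ^ 2 :=
        Finset.sum_congr rfl fun i hi => congrArg (fun y => ‖X y‖ ^ 2) (hv i hi)

theorem existsUnique_eq_comp_lpPi_coord (h : IsSkewDecomposition T U E J C)
    (hU : ∀ i, IsUnitaryOp (U i)) (hW : IsUnitaryOp W)
    (hdisj : Pairwise fun i j => AreDisjointOps (U i) (U j)) (hXT : X.comp T = W.comp X) :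
    ∃! Z : lp K 2 →L[ℂ] L, Z.comp (unitarySum U hU) = W.comp Z ∧
      X = Z.comp (lpPi ENNReal.ofNat_ne_top J M hM) := by
  classical
  have horth : OrthogonalFamily ℂ _ fun i => (X.comp (E i)).range.subtypeₗᵢ :=
    orthogonalFamily_range_of_intertwining hU hW hdisj (h.comp_embed_intertwining hXT)
  let Z : lp K 2 →L[ℂ] L := orthogonalSum (fun i => X.comp (E i)) horth (‖X‖₊ * C) fun i v => by
    rw [NNReal.coe_mul, mul_assoc]
    exact X.le_opNorm_of_le (h.norm_embed_le i v)
  have hZ (i : ι) (v : K i) : Z (lp.single 2 i v) = X (E i v) := orthogonalSum_single ..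
  have hXZ : X = Z.comp (lpPi ENNReal.ofNat_ne_top J M hM) := by
    refine eq_of_eqOn_iSup h.dense ?_
    rintro i _ ⟨v, rfl⟩
    change X (E i v) = Z (lpPi _ J M hM (E i v))
    rw [h.lpPi_coord_embed, hZ]
  refine ⟨Z, ⟨?_, hXZ⟩, fun Z' ⟨_, hXZ'⟩ => ?_⟩
  · refine lp.ext_continuousLinearMap ENNReal.ofNat_ne_top fun i =>
      ContinuousLinearMap.ext fun v => ?_
    change Z (unitarySum U hU (lp.single 2 i v)) = W (Z (lp.single 2 i v))
    rw [unitarySum_single, hZ, hZ]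
    exact DFunLike.congr_fun (h.comp_embed_intertwining hXT i) v
  · exact DFunLike.coe_injective <| (h.denseRange_lpPi_coord hM).equalizer Z'.continuous
      Z.continuous (congrArg DFunLike.coe (hXZ'.symm.trans hXZ))

variable [CompleteSpace H]

theorem exists_norm_le_mul_norm_map (h : IsSkewDecomposition T U E J C)
    (hU : ∀ i, IsUnitaryOp (U i)) (hX : IsUnitaryAsymptote T L X W) :
    ∃ D : ℝ, ∀ i, ∀ x ∈ (E i).range, ‖x‖ ≤ D * ‖X x‖ := by
  choose Z hZ using fun i => (hX.2.2.2 (K i) (U i) (J i) (hU i) (h.coord_map i)).exists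
  have hJ (i : ι) (x : H) : J i x = Z i (X x) := DFunLike.congr_fun (hZ i).2 x
  obtain ⟨D, hD⟩ := hX.exists_norm_le_of_norm_comp_le hU (fun i => (hZ i).1) fun i x =>
    (congrArg norm (hJ i x)).symm.trans_le (h.norm_coord_le i x)
  refine ⟨C * D, ?_⟩
  rintro i _ ⟨v, rfl⟩
  calc ‖E i v‖ ≤ C * ‖v‖ := h.norm_embed_le i v
    _ = C * ‖Z i (X (E i v))‖ := by rw [← hJ, h.coord_embed]
    _ ≤ C * (D * ‖X (E i v)‖) := by
        gcongr
        exact (Z i).le_of_opNorm_le (hD i) _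
    _ = C * D * ‖X (E i v)‖ := (mul_assoc ..).symm

theorem exists_lowerRieszBound_of_isUnitaryAsymptote (h : IsSkewDecomposition T U E J C)
    (hU : ∀ i, IsUnitaryOp (U i)) (hdisj : Pairwise fun i j => AreDisjointOps (U i) (U j))
    (hX : IsUnitaryAsymptote T L X W) :
    ∃ c, 0 < c ∧ LowerRieszBound (fun i => (E i).range) c := by
  obtain ⟨D, hD⟩ := h.exists_norm_le_mul_norm_map hU hX
  refine exists_lowerRieszBound_of_sum_norm_sq_le (M := D * ‖X‖) fun s x hx => ?_
  calc ∑ i ∈ s, ‖x i‖ ^ 2 ≤ ∑ i ∈ s, (D * ‖X (x i)‖) ^ 2 := by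
        gcongr with i hi
        exact hD i _ (hx i hi)
    _ = D ^ 2 * ‖X (∑ i ∈ s, x i)‖ ^ 2 := by
        simp only [mul_pow, ← Finset.mul_sum, h.norm_map_sum_sq_eq hU hX.1 hdisj hX.2.1 hx]
    _ ≤ D ^ 2 * (‖X‖ * ‖∑ i ∈ s, x i‖) ^ 2 := by
        gcongr
        exact X.le_opNorm _
    _ = (D * ‖X‖ * ‖∑ i ∈ s, x i‖) ^ 2 := by ring

theorem isUnitaryAsymptote_lpPi_coord (h : IsSkewDecomposition T U E J C)
    (hU : ∀ i, IsUnitaryOp (U i)) (hdisj : Pairwise fun i j => AreDisjointOps (U i) (U j)) :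
    IsUnitaryAsymptote T (lp K 2) (lpPi ENNReal.ofNat_ne_top J M hM) (unitarySum U hU) := by
  refine ⟨isUnitaryOp_unitarySum hU, ?_, ?_, fun L _ _ _ W Y hW hYT =>
    h.existsUnique_eq_comp_lpPi_coord hM hU hW hdisj hYT⟩
  · ext x i
    exact DFunLike.congr_fun (h.coord_map i) x
  · refine Submodule.dense_iff_topologicalClosure_eq_top.1 ((h.denseRange_lpPi_coord hM).mono ?_)
    exact subset_trans (Set.subset_iUnion_of_subset 0 subset_rfl) Submodule.subset_span

theorem hasUnitaryAsymptote_iff (h : IsSkewDecomposition T U E J C)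
    (hU : ∀ i, IsUnitaryOp (U i)) (hdisj : Pairwise fun i j => AreDisjointOps (U i) (U j)) :
    HasUnitaryAsymptote T ↔ ∃ c, 0 < c ∧ LowerRieszBound (fun i => (E i).range) c := by
  constructor
  · rintro ⟨L, _, _, _, X, W, hX⟩
    exact h.exists_lowerRieszBound_of_isUnitaryAsymptote hU hdisj hX
  · rintro ⟨c, hc, hlow⟩
    lift c to ℝ≥0 using hc.le
    exact ⟨lp K 2, _, _, inferInstance, _, _,
      h.isUnitaryAsymptote_lpPi_coord (M := C / c)
        (by simpa using h.sum_norm_coord_sq_le (NNReal.coe_pos.1 hc) hlow) hU hdisj⟩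

end IsSkewDecomposition

theorem exists_norm_trans_smulLeft_le_one {𝕜 V K : Type*} [RCLike 𝕜] [NormedAddCommGroup V]
    [NormedSpace 𝕜 V] [NormedAddCommGroup K] [NormedSpace 𝕜 K] (e : V ≃L[𝕜] K) :
    ∃ a : 𝕜ˣ, ‖(e.trans (.smulLeft a) : V →L[𝕜] K)‖ ≤ 1 ∧
      ‖((e.trans (.smulLeft a)).symm : K →L[𝕜] V)‖ ≤
        ‖(e : V →L[𝕜] K)‖ * ‖(e.symm : K →L[𝕜] V)‖ := by
  by_cases he : ‖(e : V →L[𝕜] K)‖ = 0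
  · have hzero (x : V) : e x = 0 := norm_le_zero_iff.1 <|
      ((e : V →L[𝕜] K).le_opNorm x).trans_eq (by rw [he, zero_mul])
    refine ⟨1, opNorm_le_bound _ zero_le_one fun x => ?_,
      opNorm_le_bound _ (by positivity) fun v => ?_⟩
    · simp [hzero]
    · obtain ⟨x, rfl⟩ := e.surjective v
      simp [hzero]
  · let a : 𝕜ˣ := Units.mk0 (‖(e : V →L[𝕜] K)‖ : 𝕜) (RCLike.ofReal_ne_zero.2 he)
    have ha : ‖(a : 𝕜)‖ = ‖(e : V →L[𝕜] K)‖ := by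
      rw [Units.val_mk0, RCLike.norm_ofReal, abs_norm]
    refine ⟨a⁻¹, opNorm_le_bound _ zero_le_one fun x => ?_,
      opNorm_le_bound _ (by positivity) fun v => ?_⟩
    · change ‖(↑a⁻¹ : 𝕜) • e x‖ ≤ _
      rw [norm_smul, Units.val_inv_eq_inv_val, norm_inv, ha, one_mul,
        inv_mul_le_iff₀ (by positivity)]
      exact (e : V →L[𝕜] K).le_opNorm x
    · change ‖e.symm ((↑a : 𝕜) • v)‖ ≤ _
      rw [map_smul, norm_smul, ha, mul_assoc]
      gcongr
      exact (e.symm : K →L[𝕜] V).le_opNorm v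

theorem range_subtypeL_comp_symm {R M N : Type*} [Semiring R] [AddCommMonoid M] [Module R M]
    [TopologicalSpace M] [AddCommMonoid N] [Module R N] [TopologicalSpace N] {S : Submodule R M}
    (f : S ≃L[R] N) : (S.subtypeL.comp (f.symm : N →L[R] S)).range = S := by
  refine le_antisymm ?_ fun x hx => ⟨f ⟨x, hx⟩, congrArg Subtype.val (f.symm_apply_apply _)⟩
  rintro _ ⟨v, rfl⟩
  exact (f.symm v).2

section Projections

variable {ι H : Type} {K : ι → Type} [NormedAddCommGroup H] [InnerProductSpace ℂ H]
  [∀ i, NormedAddCommGroup (K i)] [∀ i, InnerProductSpace ℂ (K i)] {T : H →L[ℂ] H}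
  {U : ∀ i, K i →L[ℂ] K i} {V : ι → Submodule ℂ H} (hTV : ∀ i, ∀ x ∈ V i, T x ∈ V i)
  (hdense : (⨆ i, V i).topologicalClosure = ⊤) (e : ∀ i, V i ≃L[ℂ] K i)
  (he : ∀ i (x : V i), e i ⟨T x, hTV i x x.2⟩ = U i (e i x)) {Q : ι → H →L[ℂ] H}
  (hQmem : ∀ i x, Q i x ∈ V i) (hQid : ∀ i, ∀ x ∈ V i, Q i x = x)
  (hQker : ∀ i k, k ≠ i → ∀ x ∈ V k, Q i x = 0)

include hdense he hQid hQker in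
theorem isSkewDecomposition_of_projections {C : ℝ≥0} (he_norm : ∀ i x, ‖e i x‖ ≤ ‖x‖)
    (he_symm : ∀ i v, ‖(e i).symm v‖ ≤ C * ‖v‖) (hQ : ∀ i x, ‖Q i x‖ ≤ C * ‖x‖) :
    IsSkewDecomposition T U (fun i => (V i).subtypeL.comp ((e i).symm : K i →L[ℂ] V i))
      (fun i => (e i : V i →L[ℂ] K i).comp ((Q i).codRestrict (V i) (hQmem i))) C where
  map_embed i v := by
    obtain ⟨x, rfl⟩ := (e i).surjective v
    change T ((e i).symm (e i x)) = (e i).symm (U i (e i x))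
    rw [← he, ContinuousLinearEquiv.symm_apply_apply, ContinuousLinearEquiv.symm_apply_apply]
  coord_embed i v :=
    (congrArg (e i) (Subtype.ext (hQid i _ ((e i).symm v).2))).trans ((e i).apply_symm_apply v)
  coord_embed_of_ne i k hk v :=
    (congrArg (e i) (Subtype.ext (hQker i k hk _ ((e k).symm v).2))).trans (map_zero (e i))
  dense := by simpa only [range_subtypeL_comp_symm] using hdense
  norm_embed_le := he_symm
  norm_coord_le i x := (he_norm i _).trans (hQ i x)

include hdense he hQmem hQid hQker in
theorem exists_isSkewDecomposition_of_projections
    (hcond : ∃ C, ∀ i, ‖(e i : V i →L[ℂ] K i)‖ * ‖((e i).symm : K i →L[ℂ] V i)‖ ≤ C)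
    (hQ : ∃ C, ∀ i, ‖Q i‖ ≤ C) :
    ∃ (E : ∀ i, K i →L[ℂ] H) (J : ∀ i, H →L[ℂ] K i) (C : ℝ≥0),
      IsSkewDecomposition T U E J C ∧ ∀ i, (E i).range = V i := by
  obtain ⟨C₁, hC₁⟩ := hcond
  obtain ⟨C₂, hC₂⟩ := hQ
  choose a hnorm hnorm_symm using fun i => exists_norm_trans_smulLeft_le_one (e i)
  have hU (i : ι) (x : V i) : (e i).trans (.smulLeft (a i)) ⟨T x, hTV i x x.2⟩ =
      U i ((e i).trans (.smulLeft (a i)) x) := by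
    change a i • e i _ = U i (a i • e i x)
    rw [he, Units.smul_def, Units.smul_def, map_smul]
  have hC₁' : C₁ ≤ (max C₁ C₂).toNNReal := (le_max_left ..).trans (Real.le_coe_toNNReal _)
  have hC₂' : C₂ ≤ (max C₁ C₂).toNNReal := (le_max_right ..).trans (Real.le_coe_toNNReal _)
  refine ⟨_, _, (max C₁ C₂).toNNReal, isSkewDecomposition_of_projections hTV hdense
    (fun i => (e i).trans (.smulLeft (a i))) hU hQmem hQid hQker (fun i x => ?_) (fun i v => ?_)
    fun i x => ?_, fun i => range_subtypeL_comp_symm _⟩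
  · exact (ContinuousLinearMap.le_of_opNorm_le _ (hnorm i) x).trans_eq (one_mul _)
  · exact ContinuousLinearMap.le_of_opNorm_le _ (((hnorm_symm i).trans (hC₁ i)).trans hC₁') v
  · exact (Q i).le_of_opNorm_le ((hC₂ i).trans hC₂') x

end Projections

theorem le_topologicalClosure_biSup_ne {ι R E : Type*} [Semiring R] [AddCommMonoid E] [Module R E]
    [TopologicalSpace E] [ContinuousAdd E] [ContinuousConstSMul R E] (V : ι → Submodule R E)
    {i k : ι} (hk : k ≠ i) : V k ≤ (⨆ j ∈ {j | j ≠ i}, V j).topologicalClosure :=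
  (le_biSup V hk).trans (Submodule.le_topologicalClosure _)

theorem topologicalClosure_iSup_eq_top_of_sup_eq_top_s11 {ι R E : Type*} [Semiring R]
    [AddCommMonoid E] [Module R E] [TopologicalSpace E] [ContinuousAdd E]
    [ContinuousConstSMul R E] {V : ι → Submodule R E} {i : ι}
    (h : V i ⊔ (⨆ j ∈ {j | j ≠ i}, V j).topologicalClosure = ⊤) :
    (⨆ j, V j).topologicalClosure = ⊤ :=
  top_unique <| h.ge.trans <| sup_le
    ((le_iSup V i).trans (Submodule.le_topologicalClosure _))
    (Submodule.topologicalClosure_mono (iSup₂_le_iSup ..))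

theorem has_unitary_asymptote_iff_lower_estimate_general
    {H : Type} [NormedAddCommGroup H] [InnerProductSpace ℂ H] [CompleteSpace H]
    {ι : Type} {K : ι → Type} [∀ i, NormedAddCommGroup (K i)] [∀ i, InnerProductSpace ℂ (K i)]
    [∀ i, CompleteSpace (K i)] {U : ∀ i, K i →L[ℂ] K i} (hU : ∀ i, IsUnitaryOp (U i))
    (hdisj : Pairwise fun i j => AreDisjointOps (U i) (U j)) {T : H →L[ℂ] H}
    {V : ι → Submodule ℂ H} (hTV : ∀ i, ∀ x ∈ V i, T x ∈ V i)
    (hdense : (⨆ i, V i).topologicalClosure = ⊤)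
    (e : ∀ i, V i ≃L[ℂ] K i) (he : ∀ i (x : V i), e i ⟨T x, hTV i x x.2⟩ = U i (e i x))
    {Q : ι → H →L[ℂ] H} (hQmem : ∀ i x, Q i x ∈ V i) (hQid : ∀ i, ∀ x ∈ V i, Q i x = x)
    (hQker : ∀ i k, k ≠ i → ∀ x ∈ V k, Q i x = 0)
    (hcond : ∃ C, ∀ i, ‖(e i : V i →L[ℂ] K i)‖ * ‖((e i).symm : K i →L[ℂ] V i)‖ ≤ C)
    (hQ : ∃ C, ∀ i, ‖Q i‖ ≤ C) :
    HasUnitaryAsymptote T ↔ ∃ c, 0 < c ∧ LowerRieszBound V c := by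
  obtain ⟨E, J, C, h, hrange⟩ :=
    exists_isSkewDecomposition_of_projections hTV hdense e he hQmem hQid hQker hcond hQ
  simpa only [hrange] using h.hasUnitaryAsymptote_iff hU hdisj

/-- Theorem 2.6: under (xxnxxn1) and (qqn), `T` has a unitary asymptote if and only if the
family `{H_n}` satisfies a lower Riesz-type estimate. -/
theorem has_unitary_asymptote_iff_lower_estimate
    {H : Type} [NormedAddCommGroup H] [InnerProductSpace ℂ H] [CompleteSpace H]
    [TopologicalSpace.SeparableSpace H]
    (K0 : ℕ → Type) [∀ n, NormedAddCommGroup (K0 n)] [∀ n, InnerProductSpace ℂ (K0 n)]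
    [∀ n, CompleteSpace (K0 n)] [∀ n, TopologicalSpace.SeparableSpace (K0 n)]
    -- the unitaries `U_{0n}`, each reductive, with pairwise singular spectral measures:
    (U0 : ∀ n, K0 n →L[ℂ] K0 n)
    (hU0 : ∀ n, IsUnitaryOp (U0 n))
    (hU0red : ∀ (n) (F : Submodule ℂ (K0 n)), IsClosed (F : Set (K0 n)) →
      (∀ x ∈ F, U0 n x ∈ F) → ∀ x ∈ F, ContinuousLinearMap.adjoint (U0 n) x ∈ F)
    (hsing : ∀ n k, n ≠ k → ∀ Z : K0 n →L[ℂ] K0 k, Z.comp (U0 n) = (U0 k).comp Z → Z = 0)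
    (T : H →L[ℂ] H)
    -- the nonzero closed `T`-invariant subspaces `H_n`:
    (Hn : ℕ → Submodule ℂ H)
    (hHcl : ∀ n, IsClosed ((Hn n : Set H)))
    (hHne : ∀ n, Hn n ≠ ⊥)
    (hTH : ∀ n, ∀ x ∈ Hn n, T x ∈ Hn n)
    -- `Vn n = ⋁_{k ≠ n} H_k`:
    (Vn : ℕ → Submodule ℂ H)
    (hVn : ∀ n, Vn n = (⨆ k ∈ {k : ℕ | k ≠ n}, Hn k).topologicalClosure)
    -- (main0):
    (hmain0 : ∀ n, Hn n ⊓ Vn n = ⊥ ∧ Hn n ⊔ Vn n = ⊤)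
    -- (main1): the invertible intertwiners `X_n : H_n → K_{0n}`:
    (X0 : ∀ n, ↥(Hn n) ≃L[ℂ] K0 n)
    (hX0 : ∀ (n) (x : ↥(Hn n)), X0 n ⟨T ↑x, hTH n ↑x x.2⟩ = U0 n (X0 n x))
    -- the skew projections `Q_n` onto `H_n` along `⋁_{k ≠ n} H_k`:
    (Q : ℕ → H →L[ℂ] H)
    (hQmem : ∀ n x, Q n x ∈ Hn n)
    (hQid : ∀ n, ∀ x ∈ Hn n, Q n x = x)
    (hQker : ∀ n, ∀ x ∈ Vn n, Q n x = 0)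
    -- (xxnxxn1):
    (hXX : ∃ C : ℝ, ∀ n,
      ‖(X0 n : ↥(Hn n) →L[ℂ] K0 n)‖ * ‖((X0 n).symm : K0 n →L[ℂ] ↥(Hn n))‖ ≤ C)
    -- (qqn):
    (hQbd : ∃ C : ℝ, ∀ n, ‖Q n‖ ≤ C) :
    (∃ (K : Type) (_ : NormedAddCommGroup K) (_ : InnerProductSpace ℂ K) (_ : CompleteSpace K)
      (X : H →L[ℂ] K) (U : K →L[ℂ] K), IsUnitaryAsymptote T K X U) ↔
    (∃ c : ℝ, 0 < c ∧ ∀ (s : Finset ℕ) (x : ℕ → H), (∀ n ∈ s, x n ∈ Hn n) →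
      c ^ 2 * ∑ n ∈ s, ‖x n‖ ^ 2 ≤ ‖∑ n ∈ s, x n‖ ^ 2) := by
  obtain rfl : Vn = _ := funext hVn
  exact has_unitary_asymptote_iff_lower_estimate_general hU0 hsing hTH
    (topologicalClosure_iSup_eq_top_of_sup_eq_top_s11 (hmain0 0).2) X0 hX0 hQmem hQid
    (fun n _ hk x hx => hQker n x (le_topologicalClosure_biSup_ne Hn hk hx)) hXX hQbd
end
end
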